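/- Let n ≥ 1 and let K be a smooth, strictly convex body in ℝ^{n+1} with positive support function h. Set M := max_{S^n} h·det(A+x⊗x), m := min_{S^n} h·det(A+x⊗x), ε := M/m − 1, c(K) := (∫ ∇h_K dV)/(∫ dV), and h̃(x) := h(x) − ⟨x, c(K)⟩. Then (n+1+ε)·∫_{S^n} (|∇h_K(x) − c(K)|² − h̃(x)²) dθ ≤ n·ε·∫_{S^n} h̃(x)² dθ. -/

import Mathlib

open MeasureTheory Metric Real
open scoped InnerProductSpace ENNReal Topology

noncomputable section

/-- Euclidean space `ℝ^{n+1}`. -/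
abbrev Eu (n : ℕ) : Type := EuclideanSpace ℝ (Fin (n + 1))

/-- The unit sphere `S^n ⊆ ℝ^{n+1}` as a subtype. -/
abbrev Sph (n : ℕ) : Type := Metric.sphere (0 : Eu n) 1

/-- The spherical Lebesgue (surface) measure on `S^n`. -/
def sphMeas (n : ℕ) : Measure (Sph n) := (volume : Measure (Eu n)).toSphere

/-- The support function of a set `K ⊆ ℝ^{n+1}`. -/
def sfn {n : ℕ} (K : Set (Eu n)) (z : Eu n) : ℝ :=
  sSup ((fun y => ⟪z, y⟫_ℝ) '' K)

/-- The Hessian endomorphism `A(x) = D(∇ h_K)(x)`. -/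
def hessA {n : ℕ} (K : Set (Eu n)) (x : Eu n) : Eu n →L[ℝ] Eu n :=
  fderiv ℝ (gradient (sfn K)) x

/-- The rank-one endomorphism `x ⊗ x : v ↦ ⟨v, x⟩ x`. -/
def tens {n : ℕ} (x : Eu n) : Eu n →L[ℝ] Eu n :=
  (innerSL ℝ x).smulRight x

/-- `det (A(x) + x ⊗ x)`, the reciprocal Gauss curvature `1/𝒦` at `x ∈ S^n`. -/
def rK {n : ℕ} (K : Set (Eu n)) (x : Eu n) : ℝ :=
  LinearMap.det ((hessA K x + tens x : Eu n →L[ℝ] Eu n) : Eu n →ₗ[ℝ] Eu n)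

/-- `K` is a smooth, strictly convex body with positive support function. -/
structure IsSmoothConvexBody {n : ℕ} (K : Set (Eu n)) : Prop where
  compact : IsCompact K
  convex : Convex ℝ K
  interior_nonempty : (interior K).Nonempty
  pos : ∀ x : Sph n, 0 < sfn K x
  smooth : ContDiffOn ℝ (⊤ : ℕ∞) (sfn K) {(0 : Eu n)}ᶜ
  posdef : ∀ x : Sph n, ∀ v : Eu n, v ≠ 0 →
    0 < ⟪(hessA K (x : Eu n) + tens (x : Eu n)) v, v⟫_ℝ

/-- The density `h·det(A + x⊗x)` of the measure `dV` with respect to `dθ`. -/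
def dens {n : ℕ} (K : Set (Eu n)) (x : Eu n) : ℝ := sfn K x * rK K x

/-- The centroid-type point `c(K) = (∫ ∇h_K dV)/(∫ dV)`. -/
def cK {n : ℕ} (K : Set (Eu n)) : Eu n :=
  (∫ x : Sph n, dens K x ∂sphMeas n)⁻¹ •
    ∫ x : Sph n, dens K x • gradient (sfn K) x ∂sphMeas n

/-- The support function of the translated body `K - c(K)`. -/
def tsfn {n : ℕ} (K : Set (Eu n)) (x : Eu n) : ℝ := sfn K x - ⟪x, cK K⟫_ℝ


/-- One dimensional Brunn-Minkowski for compact sets. -/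
lemma bm1_compact {A B C : Set ℝ} (hA : IsCompact A) (hB : IsCompact B)
    (hAn : A.Nonempty) (hBn : B.Nonempty) (hC : ∀ a ∈ A, ∀ b ∈ B, (a + b) / 2 ∈ C) :
    volume A + volume B ≤ 2 * volume C := by
  obtain ⟨a0, ha0, hA0⟩ := hA.exists_isGreatest hAn
  obtain ⟨b0, hb0, hB0⟩ := hB.exists_isLeast hBn
  have hsub : ((fun x => b0 + x) '' A) ∪ ((fun x => a0 + x) '' B) ⊆ (fun x => (2:ℝ) • x) '' C := by
    rintro x (⟨a, ha, rfl⟩ | ⟨b, hb, rfl⟩)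
    · exact ⟨_, hC a ha b0 hb0, by simp; ring⟩
    · exact ⟨_, hC a0 ha0 b hb, by simp; ring⟩
  have hdis : AEDisjoint volume ((fun x => b0 + x) '' A) ((fun x => a0 + x) '' B) := by
    have : ((fun x => b0 + x) '' A) ∩ ((fun x => a0 + x) '' B) ⊆ {a0 + b0} := by
      rintro x ⟨⟨a, ha, rfl⟩, ⟨b, hb, h⟩⟩
      have h1 := hA0 ha
      have h2 := hB0 hb
      simp only [Set.mem_singleton_iff] at *
      linarith
    exact measure_mono_null this (by simp)
  have hmB : MeasurableSet ((fun x => a0 + x) '' B) :=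
    (hB.image (by fun_prop)).isClosed.measurableSet
  have h1 : volume A + volume B
      = volume (((fun x => b0 + x) '' A) ∪ ((fun x => a0 + x) '' B)) := by
    rw [measure_union₀ hmB.nullMeasurableSet hdis]
    simp
  rw [h1]
  refine (measure_mono hsub).trans ?_
  have := Measure.addHaar_image_homothety (volume : Measure ℝ) 0 2 C
  have h3 : volume ((fun x => (2:ℝ) • x) '' C) = ENNReal.ofReal |2 ^ Module.finrank ℝ ℝ| * volume C := by
    rw [← this]; congr 1; ext; simp [AffineMap.homothety_apply]
  rw [h3]; simp

/-- One dimensional Brunn-Minkowski. -/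
lemma bm1 {A B C : Set ℝ} (hA : MeasurableSet A) (hB : MeasurableSet B)
    (hAn : A.Nonempty) (hBn : B.Nonempty) (hC : ∀ a ∈ A, ∀ b ∈ B, (a + b) / 2 ∈ C) :
    volume A + volume B ≤ 2 * volume C := by
  have key : ∀ S : Set ℝ, MeasurableSet S → S.Nonempty → ∀ r < volume S,
      ∃ K ⊆ S, IsCompact K ∧ K.Nonempty ∧ r < volume K := by
    intro S hS _ r hr
    obtain ⟨K, hKS, hK, hrK⟩ := hS.exists_lt_isCompact hr
    refine ⟨K, hKS, hK, ?_, hrK⟩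
    by_contra h
    rw [Set.not_nonempty_iff_eq_empty] at h
    simp [h] at hrK
  have key2 : ∀ S : Set ℝ, MeasurableSet S → S.Nonempty → ∀ D : ℝ≥0∞, 
      (∀ K ⊆ S, IsCompact K → K.Nonempty → volume K ≤ D) → volume S ≤ D := by
    intro S hS hSn D h
    refine le_of_forall_lt fun r hr => ?_
    obtain ⟨K, h1, h2, h3, h4⟩ := key S hS hSn r hr
    exact h4.trans_le (h K h1 h2 h3)
  by_cases htop : volume C = ∞
  · simp [htop]
  have hb : ∀ K ⊆ A, IsCompact K → K.Nonempty → volume K + volume B ≤ 2 * volume C := by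
    intro K hKA hK hKn
    have h1 : volume B ≤ 2 * volume C - volume K := by
      refine key2 B hB hBn _ fun L hLB hL hLn => ?_
      refine ENNReal.le_sub_of_add_le_left hK.measure_lt_top.ne ?_
      exact bm1_compact hK hL hKn hLn fun a ha b hb => hC a (hKA ha) b (hLB hb)
    obtain ⟨b, hb⟩ := hBn
    have h2 : volume K ≤ 2 * volume C := by
      have := bm1_compact hK (isCompact_singleton (x := b)) hKn (by simp) (C := C)
        (by intro a ha c hc; rw [Set.mem_singleton_iff] at hc; subst hc; exact hC a (hKA ha) c hb)
      simpa using this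
    calc volume K + volume B ≤ volume K + (2 * volume C - volume K) := by gcongr
      _ = 2 * volume C := add_tsub_cancel_of_le h2
  have hBfin : volume B ≤ 2 * volume C := by
    obtain ⟨a, ha⟩ := hAn
    have := hb {a} (by simpa) isCompact_singleton (by simp)
    simpa using this
  have h2C : 2 * volume C ≠ ∞ := ENNReal.mul_ne_top (by simp) htop
  have hBt : volume B ≠ ∞ := ne_top_of_le_ne_top h2C hBfin
  have h1 : volume A ≤ 2 * volume C - volume B :=
    key2 A hA hAn _ fun K hKA hK hKn => ENNReal.le_sub_of_add_le_right hBt (hb K hKA hK hKn)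
  calc volume A + volume B ≤ (2 * volume C - volume B) + volume B := by gcongr
      _ = 2 * volume C := tsub_add_cancel_of_le hBfin

lemma layer {f : ℝ → ℝ≥0∞} (hf : Measurable f) (h1 : ∀ x, f x ≤ 1) :
    ∫⁻ x, f x = ∫⁻ t in Set.Ioi (0:ℝ), volume {x | ENNReal.ofReal t < f x} := by
  have hfin : ∀ x, f x ≠ ∞ := fun x => ne_top_of_le_ne_top (by simp) (h1 x)
  have := lintegral_eq_lintegral_meas_lt volume (f := fun x => (f x).toReal)
    (Filter.Eventually.of_forall fun x => ENNReal.toReal_nonneg) (hf.ennreal_toReal.aemeasurable)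
  simp only [ENNReal.ofReal_toReal (hfin _)] at this
  rw [this]
  refine setLIntegral_congr_fun measurableSet_Ioi fun t ht => ?_
  have ht' : 0 ≤ t := le_of_lt ht
  congr 1; ext x
  simp only [Set.mem_ofPred_eq]
  rw [ENNReal.ofReal_lt_iff_lt_toReal ht' (hfin x)]

lemma pl1_norm {f g h : ℝ → ℝ≥0∞} (hf : Measurable f) (hg : Measurable g) (hh : Measurable h)
    (hf1 : ⨆ x, f x = 1) (hg1 : ⨆ x, g x = 1)
    (H : ∀ x y, f x * g y ≤ h ((x + y) / 2) ^ 2) :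
    (∫⁻ x, f x) + (∫⁻ x, g x) ≤ 2 * ∫⁻ x, h x := by
  have hfl : ∀ x, f x ≤ 1 := fun x => hf1 ▸ le_iSup f x
  have hgl : ∀ x, g x ≤ 1 := fun x => hg1 ▸ le_iSup g x
  have e : ∫⁻ x, min (h x) 1 ≤ ∫⁻ x, h x := lintegral_mono fun x => min_le_left _ _
  refine le_trans ?_ (mul_le_mul_right e 2)
  rw [layer hf hfl, layer hg hgl, layer (hh.min measurable_const) (fun x => min_le_right _ _)]
  have hmeas : ∀ u : ℝ → ℝ≥0∞, Measurable fun t : ℝ => volume {x | ENNReal.ofReal t < u x} := by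
    intro u
    have : Antitone fun t : ℝ => volume {x | ENNReal.ofReal t < u x} := by
      intro s t hst
      refine measure_mono fun x hx => ?_
      exact lt_of_le_of_lt (ENNReal.ofReal_le_ofReal hst) hx
    exact this.measurable
  rw [← lintegral_add_left (hmeas f), ← lintegral_const_mul _ (hmeas _)]
  refine setLIntegral_mono' measurableSet_Ioi fun t ht => ?_
  have ht0 : (0:ℝ) < t := ht
  by_cases ht1 : t < 1
  · have ht1' : ENNReal.ofReal t < 1 := by simpa using ht1
    refine bm1 (measurableSet_lt measurable_const hf) (measurableSet_lt measurable_const hg) ?_ ?_ ?_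
    · rw [← hf1] at ht1'; obtain ⟨x, hx⟩ := lt_iSup_iff.1 ht1'; exact ⟨x, hx⟩
    · rw [← hg1] at ht1'; obtain ⟨x, hx⟩ := lt_iSup_iff.1 ht1'; exact ⟨x, hx⟩
    · intro a ha b hb
      simp only [Set.mem_ofPred_eq] at *
      refine lt_min ?_ ht1'
      have h2 : ENNReal.ofReal t ^ 2 < h ((a + b) / 2) ^ 2 := by
        refine lt_of_lt_of_le ?_ (H a b)
        rw [sq]
        exact ENNReal.mul_lt_mul ha hb
      by_contra hcon
      exact absurd h2 (not_lt.2 (pow_le_pow_left' (not_lt.1 hcon) 2))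
  · have ht1' : 1 ≤ ENNReal.ofReal t := by simpa using not_lt.1 ht1
    have : ∀ u : ℝ → ℝ≥0∞, (∀ x, u x ≤ 1) → {x | ENNReal.ofReal t < u x} = ∅ := by
      intro u hu
      ext x; simp only [Set.mem_ofPred_eq, Set.mem_empty_iff_false, iff_false, not_lt]
      exact (hu x).trans ht1'
    simp [this f hfl, this g hgl]

lemma ennreal_amgm {a b c : ℝ≥0∞} (h : a + b ≤ 2 * c) : a * b ≤ c ^ 2 := by
  by_cases hc : c = ∞
  · simp [hc]
  have h2 : 2 * c ≠ ∞ := ENNReal.mul_ne_top (by simp) hc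
  have ha : a ≠ ∞ := ne_top_of_le_ne_top h2 (le_self_add.trans h)
  have hb : b ≠ ∞ := ne_top_of_le_ne_top h2 (le_add_self.trans h)
  lift a to NNReal using ha
  lift b to NNReal using hb
  lift c to NNReal using hc
  have h' : a + b ≤ 2 * c := by exact_mod_cast h
  have h'' : (a:ℝ) + b ≤ 2 * c := by exact_mod_cast h'
  have : (a:ℝ) * b ≤ c ^ 2 := by
    nlinarith [sq_nonneg ((a:ℝ) - b), a.2, b.2, c.2, NNReal.coe_nonneg a, NNReal.coe_nonneg b]
  exact_mod_cast this

lemma pl1_bdd {f g h : ℝ → ℝ≥0∞} (hf : Measurable f) (hg : Measurable g) (hh : Measurable h)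
    (hf1 : ⨆ x, f x ≠ ∞) (hg1 : ⨆ x, g x ≠ ∞)
    (H : ∀ x y, f x * g y ≤ h ((x + y) / 2) ^ 2) :
    (∫⁻ x, f x) * (∫⁻ x, g x) ≤ (∫⁻ x, h x) ^ 2 := by
  set F := ⨆ x, f x with hF
  set G := ⨆ x, g x with hG
  by_cases hF0 : F = 0
  · have : ∀ x, f x = 0 := fun x => le_antisymm (hF0 ▸ le_iSup f x) (by simp)
    simp [this]
  by_cases hG0 : G = 0
  · have : ∀ x, g x = 0 := fun x => le_antisymm (hG0 ▸ le_iSup g x) (by simp)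
    simp [this]
  set s : ℝ≥0∞ := (F * G) ^ (1/2 : ℝ) with hs
  have hFG0 : F * G ≠ 0 := mul_ne_zero hF0 hG0
  have hFGt : F * G ≠ ∞ := ENNReal.mul_ne_top hf1 hg1
  have hs2 : s ^ 2 = F * G := by
    rw [hs, ← ENNReal.rpow_natCast, ← ENNReal.rpow_mul]; simp
  have hs0 : s ≠ 0 := by intro h0; rw [h0] at hs2; exact hFG0 (by rw [← hs2]; simp)
  have hst : s ≠ ∞ := by intro h0; rw [h0] at hs2; exact hFGt (by rw [← hs2]; simp)
  have key := pl1_norm (f := fun x => F⁻¹ * f x) (g := fun x => G⁻¹ * g x)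
    (h := fun x => s⁻¹ * h x) (hf.const_mul _) (hg.const_mul _) (hh.const_mul _)
    (by rw [← ENNReal.mul_iSup, ← hF, ENNReal.inv_mul_cancel hF0 hf1])
    (by rw [← ENNReal.mul_iSup, ← hG, ENNReal.inv_mul_cancel hG0 hg1])
    (by
      intro x y
      calc F⁻¹ * f x * (G⁻¹ * g y) = (F * G)⁻¹ * (f x * g y) := by
            rw [ENNReal.mul_inv (Or.inl hF0) (Or.inl hf1)]; ring
        _ ≤ (F * G)⁻¹ * h ((x + y) / 2) ^ 2 := by gcongr; exact H x y
        _ = _ := by rw [← hs2, mul_pow, ENNReal.inv_pow])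
  rw [lintegral_const_mul _ hf, lintegral_const_mul _ hg, lintegral_const_mul _ hh] at key
  have k2 := ennreal_amgm key
  have k3 : (F * G) * (F⁻¹ * ∫⁻ x, f x) * (G⁻¹ * ∫⁻ x, g x) ≤ s ^ 2 * (s⁻¹ * ∫⁻ x, h x) ^ 2 := by
    rw [mul_assoc, hs2]; gcongr
  calc (∫⁻ x, f x) * (∫⁻ x, g x) = (F * F⁻¹) * (G * G⁻¹) * ((∫⁻ x, f x) * (∫⁻ x, g x)) := by
        rw [ENNReal.mul_inv_cancel hF0 hf1, ENNReal.mul_inv_cancel hG0 hg1]; simp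
    _ = (F * G) * (F⁻¹ * ∫⁻ x, f x) * (G⁻¹ * ∫⁻ x, g x) := by ring
    _ ≤ s ^ 2 * (s⁻¹ * ∫⁻ x, h x) ^ 2 := k3
    _ = (s * s⁻¹) ^ 2 * (∫⁻ x, h x) ^ 2 := by ring
    _ = _ := by rw [ENNReal.mul_inv_cancel hs0 hst]; simp

/-- One dimensional Prekopa-Leindler. -/
lemma pl1 {f g h : ℝ → ℝ≥0∞} (hf : Measurable f) (hg : Measurable g) (hh : Measurable h)
    (H : ∀ x y, f x * g y ≤ h ((x + y) / 2) ^ 2) :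
    (∫⁻ x, f x) * (∫⁻ x, g x) ≤ (∫⁻ x, h x) ^ 2 := by
  have hmono : ∀ u : ℝ → ℝ≥0∞, Measurable u →
      ∫⁻ x, u x = ⨆ k : ℕ, ∫⁻ x, min (u x) k := by
    intro u hu
    rw [← lintegral_iSup (fun k => hu.min measurable_const)]
    · congr 1; ext x
      have : (⨆ k : ℕ, min (u x) (k : ℝ≥0∞)) = min (u x) (⨆ k : ℕ, (k : ℝ≥0∞)) := by
        rw [inf_iSup_eq]
      rw [this, ENNReal.iSup_natCast]; simp
    · intro i j hij x
      exact min_le_min_left _ (by exact_mod_cast hij)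
  have hbd : ∀ (u : ℝ → ℝ≥0∞) (k : ℕ), ⨆ x, min (u x) (k:ℝ≥0∞) ≠ ∞ := fun u k =>
    ne_top_of_le_ne_top (by simp) (iSup_le fun x => min_le_right _ (k:ℝ≥0∞))
  have hm : ∀ (u : ℝ → ℝ≥0∞) (i j : ℕ), i ≤ j →
      ∫⁻ x, min (u x) (i : ℝ≥0∞) ≤ ∫⁻ x, min (u x) (j : ℝ≥0∞) := by
    intro u i j hij
    exact lintegral_mono fun x => min_le_min_left _ (by exact_mod_cast hij)
  rw [hmono f hf, hmono g hg, ENNReal.iSup_mul]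
  refine iSup_le fun i => ?_
  rw [ENNReal.mul_iSup]
  refine iSup_le fun j => ?_
  refine (mul_le_mul' (hm f i (max i j) (le_max_left _ _)) (hm g j (max i j) (le_max_right _ _))).trans ?_
  refine pl1_bdd (hf.min measurable_const) (hg.min measurable_const) hh (hbd f _) (hbd g _) ?_
  intro x y
  exact (mul_le_mul' (min_le_left _ _) (min_le_left _ _)).trans (H x y)

/-- Prekopa-Leindler. -/
lemma pln (N : ℕ) : ∀ {f g h : (Fin N → ℝ) → ℝ≥0∞}, Measurable f → Measurable g → Measurable h →
    (∀ x y, f x * g y ≤ h ((1/2 : ℝ) • (x + y)) ^ 2) →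
    (∫⁻ x, f x) * (∫⁻ x, g x) ≤ (∫⁻ x, h x) ^ 2 := by
  induction N with
  | zero =>
    intro f g h hf hg hh H
    have e : ∀ u : (Fin 0 → ℝ) → ℝ≥0∞, ∫⁻ x, u x = u 0 := by
      intro u
      rw [lintegral_unique]
      have : (volume : Measure (Fin 0 → ℝ)) Set.univ = 1 := by simp [volume_pi]
      rw [this, mul_one]; congr 1; exact Subsingleton.elim _ _
    rw [e, e, e]
    convert H 0 0 using 2
    simp
  | succ N ih =>
    intro f g h hf hg hh H
    have mp := (volume_preserving_piFinSuccAbove (fun _ : Fin (N+1) => ℝ) 0).symm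
    have e : ∀ u : (Fin (N+1) → ℝ) → ℝ≥0∞, Measurable u →
        ∫⁻ x, u x = ∫⁻ s : ℝ, ∫⁻ y : Fin N → ℝ, u (Fin.cons s y) := by
      intro u hu
      rw [← mp.lintegral_comp hu, Measure.volume_eq_prod, lintegral_prod _ (by
        exact (hu.comp mp.measurable).aemeasurable)]
      simp [MeasurableEquiv.piFinSuccAbove, Fin.insertNthEquiv]
    have hc : ∀ u : (Fin (N+1) → ℝ) → ℝ≥0∞, Measurable u →
        Measurable fun p : ℝ × (Fin N → ℝ) => u (Fin.cons p.1 p.2) := by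
      intro u hu
      refine hu.comp ?_
      rw [measurable_pi_iff]
      intro i
      refine Fin.cases ?_ (fun j => ?_) i
      · simpa using measurable_fst
      · simp only [Fin.cons_succ]
        exact (measurable_pi_apply j).comp measurable_snd
    rw [e f hf, e g hg, e h hh]
    refine pl1 (hc f hf).lintegral_prod_right' (hc g hg).lintegral_prod_right'
      (hc h hh).lintegral_prod_right' ?_
    intro s t
    refine ih ((hc f hf).comp measurable_prodMk_left) ((hc g hg).comp measurable_prodMk_left)
      ((hc h hh).comp measurable_prodMk_left) ?_
    intro x y
    refine (H _ _).trans (le_of_eq ?_)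
    congr 2
    ext i
    refine Fin.cases ?_ (fun j => ?_) i
    · simp; ring
    · simp; ring

/-- Multiplicative Brunn-Minkowski inequality. -/
lemma bm {n : ℕ} {A B C : Set (Eu n)} (hA : MeasurableSet A) (hB : MeasurableSet B)
    (hC : MeasurableSet C) (H : ∀ a ∈ A, ∀ b ∈ B, (1/2 : ℝ) • (a + b) ∈ C) :
    volume A * volume B ≤ volume C ^ 2 := by
  have mp := PiLp.volume_preserving_toLp (Fin (n+1))
  have e : ∀ S : Set (Eu n), MeasurableSet S →
      volume S = ∫⁻ x : Fin (n+1) → ℝ, S.indicator 1 (WithLp.toLp 2 x) := by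
    intro S hS
    rw [mp.lintegral_comp (f := S.indicator 1) (measurable_one.indicator hS),
      lintegral_indicator_one hS]
  have hm : ∀ S : Set (Eu n), MeasurableSet S → 
      Measurable fun x : Fin (n+1) → ℝ => S.indicator (1 : Eu n → ℝ≥0∞) (WithLp.toLp 2 x) :=
    fun S hS => (measurable_one.indicator hS).comp mp.measurable
  rw [e A hA, e B hB, e C hC]
  refine pln _ (hm A hA) (hm B hB) (hm C hC) ?_
  intro x y
  by_cases hx : WithLp.toLp 2 x ∈ A
  · by_cases hy : WithLp.toLp 2 y ∈ B
    · have := H _ hx _ hy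
      have h2 : (WithLp.toLp 2 ((1/2 : ℝ) • (x + y)) : Eu n) ∈ C := by
        simpa [WithLp.toLp_smul, WithLp.toLp_add] using this
      simp only [Set.indicator_of_mem hx, Set.indicator_of_mem hy, Set.indicator_of_mem h2]
      simp
    · simp [Set.indicator_of_notMem hy]
  · simp [Set.indicator_of_notMem hx]



lemma sfn_ne {n : ℕ} {K : Set (Eu n)} (hK : IsSmoothConvexBody K) : K.Nonempty := hK.interior_nonempty.mono interior_subset

lemma sfn_bdd {n : ℕ} {K : Set (Eu n)} (hK : IsSmoothConvexBody K) (z : Eu n) : BddAbove ((fun y => ⟪z, y⟫_ℝ) '' K) :=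
  (hK.compact.image (by fun_prop)).bddAbove

lemma inner_le_sfn {n : ℕ} {K : Set (Eu n)} (hK : IsSmoothConvexBody K) (z : Eu n) {y : Eu n} (hy : y ∈ K) : ⟪z, y⟫_ℝ ≤ sfn K z :=
  le_csSup (sfn_bdd hK z) ⟨y, hy, rfl⟩

lemma sfn_exists {n : ℕ} {K : Set (Eu n)} (hK : IsSmoothConvexBody K) (z : Eu n) : ∃ y ∈ K, ⟪z, y⟫_ℝ = sfn K z := by
  have := (hK.compact.image (f := fun y => ⟪z, y⟫_ℝ) (by fun_prop)).sSup_mem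
    ((sfn_ne hK).image _)
  obtain ⟨y, hy, h⟩ := this
  exact ⟨y, hy, h⟩

lemma sfn_le {n : ℕ} {K : Set (Eu n)} (hK : IsSmoothConvexBody K) (z : Eu n) {a : ℝ} (h : ∀ y ∈ K, ⟪z, y⟫_ℝ ≤ a) : sfn K z ≤ a := by
  obtain ⟨y, hy, e⟩ := sfn_exists hK z
  rw [← e]; exact h y hy

lemma sfn_smul {n : ℕ} {K : Set (Eu n)} (hK : IsSmoothConvexBody K) {t : ℝ} (ht : 0 ≤ t) (z : Eu n) : sfn K (t • z) = t * sfn K z := by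
  apply le_antisymm
  · refine sfn_le hK _ fun y hy => ?_
    rw [real_inner_smul_left]
    exact mul_le_mul_of_nonneg_left (inner_le_sfn hK z hy) ht
  · obtain ⟨y, hy, e⟩ := sfn_exists hK z
    rw [← e, ← real_inner_smul_left]
    exact inner_le_sfn hK _ hy

lemma sfn_contDiffAt {n : ℕ} {K : Set (Eu n)} (hK : IsSmoothConvexBody K) {z : Eu n} (hz : z ≠ 0) : ContDiffAt ℝ (⊤ : ℕ∞) (sfn K) z :=
  hK.smooth.contDiffAt (isOpen_compl_singleton.mem_nhds hz)

lemma sfn_pos {n : ℕ} {K : Set (Eu n)} (hK : IsSmoothConvexBody K) {z : Eu n} (hz : z ≠ 0) : 0 < sfn K z := by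
  have hn : 0 < ‖z‖ := norm_pos_iff.2 hz
  have h1 := hK.pos ⟨‖z‖⁻¹ • z, by simp [norm_smul, hn.ne']⟩
  have h2 : sfn K z = ‖z‖ * sfn K (‖z‖⁻¹ • z) := by
    rw [← sfn_smul hK hn.le, smul_smul, mul_inv_cancel₀ hn.ne', one_smul]
  rw [h2]; exact mul_pos hn h1

lemma sfn_hasGradientAt {n : ℕ} {K : Set (Eu n)} (hK : IsSmoothConvexBody K) {z : Eu n} (hz : z ≠ 0) :
    HasGradientAt (sfn K) (gradient (sfn K) z) z :=
  ((sfn_contDiffAt hK hz).differentiableAt (by simp)).hasGradientAt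

lemma grad_eq_of_max {n : ℕ} {K : Set (Eu n)} (hK : IsSmoothConvexBody K) {z : Eu n} (hz : z ≠ 0) {w : Eu n} {r : ℝ} 
    (h1 : ∀ x : Eu n, x ≠ 0 → ⟪x, w⟫_ℝ ≤ r * sfn K x) (h2 : ⟪z, w⟫_ℝ = r * sfn K z) :
    w = r • gradient (sfn K) z := by
  have hd : HasFDerivAt (fun x => r * sfn K x - ⟪w, x⟫_ℝ)
      (r • (InnerProductSpace.toDual ℝ (Eu n)) (gradient (sfn K) z) - innerSL ℝ w) z := by
    have := (sfn_hasGradientAt hK hz).hasFDerivAt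
    exact (this.const_mul r).sub (innerSL ℝ w).hasFDerivAt
  have hmin : IsLocalMin (fun x => r * sfn K x - ⟪w, x⟫_ℝ) z := by
    filter_upwards [isOpen_compl_singleton.mem_nhds hz] with x hx
    have := h1 x hx
    rw [real_inner_comm] at this h2
    linarith
  have h0 := hmin.hasFDerivAt_eq_zero hd
  refine ext_inner_right ℝ fun v => ?_
  have := congrArg (fun L : Eu n →L[ℝ] ℝ => L v) h0
  simp only [_root_.sub_apply, _root_.smul_apply,
    InnerProductSpace.toDual_apply_apply, innerSL_apply_apply, smul_eq_mul,
    _root_.zero_apply] at this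
  rw [real_inner_smul_left]
  linarith

lemma grad_mem {n : ℕ} {K : Set (Eu n)} (hK : IsSmoothConvexBody K) {z : Eu n} (hz : z ≠ 0) : gradient (sfn K) z ∈ K := by
  obtain ⟨y, hy, e⟩ := sfn_exists hK z
  have := grad_eq_of_max hK hz (w := y) (r := 1) 
    (fun x _ => by simpa using inner_le_sfn hK x hy) (by simpa using e)
  rw [one_smul] at this
  rwa [← this]

lemma inner_grad {n : ℕ} {K : Set (Eu n)} (hK : IsSmoothConvexBody K) {z : Eu n} (hz : z ≠ 0) : ⟪z, gradient (sfn K) z⟫_ℝ = sfn K z := by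
  obtain ⟨y, hy, e⟩ := sfn_exists hK z
  have := grad_eq_of_max hK hz (w := y) (r := 1) 
    (fun x _ => by simpa using inner_le_sfn hK x hy) (by simpa using e)
  rw [one_smul] at this
  rwa [← this]

lemma inner_grad_le {n : ℕ} {K : Set (Eu n)} (hK : IsSmoothConvexBody K) (x : Eu n) {z : Eu n} (hz : z ≠ 0) : ⟪x, gradient (sfn K) z⟫_ℝ ≤ sfn K x :=
  inner_le_sfn hK x (grad_mem hK hz)

lemma grad_smul {n : ℕ} {K : Set (Eu n)} (hK : IsSmoothConvexBody K) {t : ℝ} (ht : 0 < t) {z : Eu n} (hz : z ≠ 0) :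
    gradient (sfn K) (t • z) = gradient (sfn K) z := by
  have htz : t • z ≠ 0 := smul_ne_zero ht.ne' hz
  have := grad_eq_of_max hK hz (w := gradient (sfn K) (t • z)) (r := 1)
    (fun x _ => by simpa using inner_grad_le hK x htz) (by
      have := inner_grad hK htz
      rw [real_inner_smul_left, sfn_smul hK ht.le] at this
      simpa using mul_left_cancel₀ ht.ne' this)
  simpa using this

lemma grad_contDiffAt {n : ℕ} {K : Set (Eu n)} (hK : IsSmoothConvexBody K) {z : Eu n} (hz : z ≠ 0) :
    ContDiffAt ℝ (⊤ : ℕ∞) (gradient (sfn K)) z := by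
  have h1 : ContDiffAt ℝ (⊤ : ℕ∞) (fderiv ℝ (sfn K)) z :=
    (sfn_contDiffAt hK hz).fderiv_right (by simp)
  exact ((InnerProductSpace.toDual ℝ (Eu n)).symm.toContinuousLinearEquiv.contDiff.contDiffAt).comp z h1

lemma grad_hasFDerivAt {n : ℕ} {K : Set (Eu n)} (hK : IsSmoothConvexBody K) {z : Eu n} (hz : z ≠ 0) :
    HasFDerivAt (gradient (sfn K)) (hessA K z) z :=
  ((grad_contDiffAt hK hz).differentiableAt (by simp)).hasFDerivAt

lemma hess_contDiffAt {n : ℕ} {K : Set (Eu n)} (hK : IsSmoothConvexBody K) {z : Eu n} (hz : z ≠ 0) :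
    ContDiffAt ℝ (⊤ : ℕ∞) (hessA K) z :=
  (grad_contDiffAt hK hz).fderiv_right (by simp)

lemma hess_symm {n : ℕ} {K : Set (Eu n)} (hK : IsSmoothConvexBody K) {z : Eu n} (hz : z ≠ 0) (v w : Eu n) :
    ⟪hessA K z v, w⟫_ℝ = ⟪v, hessA K z w⟫_ℝ := by
  have hs : IsSymmSndFDerivAt ℝ (sfn K) z :=
    (sfn_contDiffAt hK hz).isSymmSndFDerivAt (by simp; exact WithTop.coe_le_coe.2 (le_top : (2:ℕ∞) ≤ ⊤))
  have key : ∀ v w : Eu n, ⟪hessA K z v, w⟫_ℝ = fderiv ℝ (fderiv ℝ (sfn K)) z v w := by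
    intro v w
    have h1 : HasFDerivAt (fderiv ℝ (sfn K)) (fderiv ℝ (fderiv ℝ (sfn K)) z) z :=
      (((sfn_contDiffAt hK hz).fderiv_right (m := (⊤ : ℕ∞)) (by simp)).differentiableAt
        (by simp)).hasFDerivAt
    have h2 : HasFDerivAt (fun z => fderiv ℝ (sfn K) z w)
        ((ContinuousLinearMap.apply ℝ ℝ w).comp (fderiv ℝ (fderiv ℝ (sfn K)) z)) z :=
      (ContinuousLinearMap.apply ℝ ℝ w).hasFDerivAt.comp z h1
    have h3 : HasFDerivAt (fun z => ⟪w, gradient (sfn K) z⟫_ℝ)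
        ((innerSL ℝ w).comp (hessA K z)) z :=
      (innerSL ℝ w).hasFDerivAt.comp z (grad_hasFDerivAt hK hz)
    have h4 : (fun z => ⟪w, gradient (sfn K) z⟫_ℝ) = fun z => fderiv ℝ (sfn K) z w := by
      ext z
      rw [real_inner_comm]
      exact InnerProductSpace.toDual_symm_apply
    rw [h4] at h3
    have := congrArg (fun L : Eu n →L[ℝ] ℝ => L v) (h3.unique h2)
    simp only [ContinuousLinearMap.comp_apply, innerSL_apply_apply,
      ContinuousLinearMap.apply_apply] at this
    rw [real_inner_comm]; exact this
  rw [key, real_inner_comm, key]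
  exact hs v w

lemma hess_self {n : ℕ} {K : Set (Eu n)} (hK : IsSmoothConvexBody K) {z : Eu n} (hz : z ≠ 0) : hessA K z z = 0 := by
  have h1 : HasDerivAt (fun t : ℝ => gradient (sfn K) (t • z)) (hessA K z z) 1 := by
    have h2 : HasDerivAt (fun t : ℝ => t • z) z 1 := by
      simpa using (hasDerivAt_id (1:ℝ)).smul_const z
    have h3 : HasFDerivAt (gradient (sfn K)) (hessA K z) ((1:ℝ) • z) := by
      rw [one_smul]; exact grad_hasFDerivAt hK hz
    exact h3.comp_hasDerivAt (1:ℝ) h2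
  have h2 : HasDerivAt (fun t : ℝ => gradient (sfn K) (t • z)) 0 1 := by
    refine (hasDerivAt_const (1:ℝ) (gradient (sfn K) z)).congr_of_eventuallyEq ?_
    filter_upwards [lt_mem_nhds (zero_lt_one : (0:ℝ) < 1)] with t ht
    exact grad_smul hK ht hz
  exact h1.unique h2

lemma sph_ne {n : ℕ} (x : Sph n) : (x : Eu n) ≠ 0 := by
  have := x.2
  intro h
  rw [h] at this
  simp at this

lemma sph_norm {n : ℕ} (x : Sph n) : ‖(x : Eu n)‖ = 1 := by
  simpa using x.2

lemma hess_pos {n : ℕ} {K : Set (Eu n)} (hK : IsSmoothConvexBody K) (x : Sph n) {v : Eu n} (hv : v - ⟪(x : Eu n), v⟫_ℝ • (x : Eu n) ≠ 0) :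
    0 < ⟪hessA K (x : Eu n) v, v⟫_ℝ := by
  have h := hK.posdef x _ hv
  have hx : ⟪(x : Eu n), (x : Eu n)⟫_ℝ = 1 := by rw [real_inner_self_eq_norm_sq, sph_norm]; simp
  have hs := hess_symm hK (sph_ne x) v x
  rw [hess_self hK (sph_ne x), inner_zero_right] at hs
  have e : ⟪(x : Eu n), v - ⟪(x : Eu n), v⟫_ℝ • (x : Eu n)⟫_ℝ = 0 := by
    rw [inner_sub_right, real_inner_smul_right, hx]; ring
  have e2 : tens (x : Eu n) (v - ⟪(x : Eu n), v⟫_ℝ • (x : Eu n)) = 0 := by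
    simp only [tens, ContinuousLinearMap.smulRight_apply, innerSL_apply_apply, e, zero_smul]
  have e3 : hessA K (x : Eu n) (v - ⟪(x : Eu n), v⟫_ℝ • (x : Eu n)) = hessA K (x : Eu n) v := by
    rw [map_sub, map_smul, hess_self hK (sph_ne x), smul_zero, sub_zero]
  rw [_root_.add_apply, e2, e3, add_zero, inner_sub_right, real_inner_smul_right, hs]
    at h
  simpa using h

lemma hess_nonneg {n : ℕ} {K : Set (Eu n)} (hK : IsSmoothConvexBody K) (x : Sph n) (v : Eu n) : 0 ≤ ⟪hessA K (x : Eu n) v, v⟫_ℝ := by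
  by_cases hv : v - ⟪(x : Eu n), v⟫_ℝ • (x : Eu n) = 0
  · rw [sub_eq_zero] at hv
    rw [hv, map_smul, hess_self hK (sph_ne x)]; simp
  · exact (hess_pos hK x hv).le


lemma hasFDerivAt_norm_sph {n : ℕ} (x : Sph n) :
    HasFDerivAt (fun y : Eu n => ‖y‖) (innerSL ℝ (x : Eu n)) (x : Eu n) := by
  have h1 : HasFDerivAt (fun y : Eu n => ‖y‖ ^ 2) (2 • innerSL ℝ (x : Eu n)) (x : Eu n) :=
    (hasStrictFDerivAt_norm_sq (x : Eu n)).hasFDerivAt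
  have h2 := h1.sqrt (by rw [sph_norm]; norm_num)
  simp only [sph_norm] at h2
  have e : (fun y : Eu n => √(‖y‖ ^ 2)) = fun y => ‖y‖ := by
    ext y; exact Real.sqrt_sq (norm_nonneg y)
  rw [e] at h2
  have e2 : (1 / (2 * √((1:ℝ) ^ 2))) • 2 • innerSL ℝ (x : Eu n) = innerSL ℝ (x : Eu n) := by
    ext v; simp
  rw [e2] at h2
  exact h2

/-- The map `x ↦ ‖x‖ ∇h(x)`. -/
def PhiK {n : ℕ} (K : Set (Eu n)) (x : Eu n) : Eu n := ‖x‖ • gradient (sfn K) x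

lemma phi_smul {n : ℕ} {K : Set (Eu n)} (hK : IsSmoothConvexBody K) {t : ℝ} (ht : 0 < t)
    {x : Eu n} (hx : x ≠ 0) : PhiK K (t • x) = t • PhiK K x := by
  simp only [PhiK, norm_smul, grad_smul hK ht hx, smul_smul, Real.norm_of_nonneg ht.le]

lemma phi_differentiableAt {n : ℕ} {K : Set (Eu n)} (hK : IsSmoothConvexBody K)
    {x : Eu n} (hx : x ≠ 0) : DifferentiableAt ℝ (PhiK K) x :=
  ((contDiffAt_norm ℝ hx (n := 1)).differentiableAt (by simp)).smul 
    (grad_hasFDerivAt hK hx).differentiableAt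

lemma phi_hasFDerivAt_sph {n : ℕ} {K : Set (Eu n)} (hK : IsSmoothConvexBody K) (x : Sph n) :
    HasFDerivAt (PhiK K) (hessA K (x : Eu n) +
      (innerSL ℝ (x : Eu n)).smulRight (gradient (sfn K) (x : Eu n))) (x : Eu n) := by
  have := (hasFDerivAt_norm_sph x).smul (grad_hasFDerivAt hK (sph_ne x))
  rw [sph_norm, one_smul] at this
  exact this

/-- Derivatives of 1-homogeneous maps are 0-homogeneous. -/
lemma fderiv_hom {n : ℕ} {F : Type*} [NormedAddCommGroup F] [NormedSpace ℝ F] {X : Eu n → F} 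
    (hX : ∀ t : ℝ, 0 < t → ∀ x : Eu n, x ≠ 0 → X (t • x) = t • X x)
    (hd : ∀ x : Eu n, x ≠ 0 → DifferentiableAt ℝ X x) {t : ℝ} (ht : 0 < t) {x : Eu n} (hx : x ≠ 0) :
    fderiv ℝ X (t • x) = fderiv ℝ X x := by
  have htx : t • x ≠ 0 := smul_ne_zero ht.ne' hx
  have h1 : HasFDerivAt (fun y => X (t • y)) (t • fderiv ℝ X (t • x)) x := by
    have h2 : HasFDerivAt (fun y : Eu n => t • y) (t • ContinuousLinearMap.id ℝ (Eu n)) x :=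
      (hasFDerivAt_id x).const_smul t
    have h3 := ((hd _ htx).hasFDerivAt).comp x h2
    have e : t • fderiv ℝ X (t • x) =
        (fderiv ℝ X (t • x)).comp (t • ContinuousLinearMap.id ℝ (Eu n)) := by
      ext v; simp
    rw [e]; exact h3
  have h2 : HasFDerivAt (fun y => X (t • y)) (t • fderiv ℝ X x) x := by
    refine ((hd x hx).hasFDerivAt.const_smul t).congr_of_eventuallyEq ?_
    filter_upwards [isOpen_compl_singleton.mem_nhds hx] with y hy
    exact hX t ht y hy
  exact smul_right_injective _ ht.ne' (h1.unique h2)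

lemma phi_det_sph {n : ℕ} {K : Set (Eu n)} (hK : IsSmoothConvexBody K) (x : Sph n) :
    (fderiv ℝ (PhiK K) (x : Eu n)).det = dens K (x : Eu n) := by
  rw [(phi_hasFDerivAt_sph hK x).fderiv]
  have hx : ⟪(x : Eu n), (x : Eu n)⟫_ℝ = 1 := by rw [real_inner_self_eq_norm_sq, sph_norm]; simp
  set w : Eu n := gradient (sfn K) (x : Eu n) - x with hw
  have key : ((hessA K (x : Eu n) +
      (innerSL ℝ (x : Eu n)).smulRight (gradient (sfn K) (x : Eu n)) : Eu n →L[ℝ] Eu n) :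
        Eu n →ₗ[ℝ] Eu n) = (LinearMap.transvection (innerSL ℝ (x : Eu n) : Eu n →ₗ[ℝ] ℝ) w) ∘ₗ
      ((hessA K x + tens (x : Eu n) : Eu n →L[ℝ] Eu n) : Eu n →ₗ[ℝ] Eu n) := by
    refine LinearMap.ext fun v => ?_
    have e1 : ⟪(x : Eu n), hessA K (x : Eu n) v⟫_ℝ = 0 := by
      rw [real_inner_comm, hess_symm hK (sph_ne x), hess_self hK (sph_ne x), inner_zero_right]
    have e2 : ⟪(x : Eu n), (hessA K (x : Eu n) + tens (x : Eu n)) v⟫_ℝ = ⟪(x : Eu n), v⟫_ℝ := by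
      simp only [_root_.add_apply, tens, ContinuousLinearMap.smulRight_apply, innerSL_apply_apply,
        inner_add_right, e1, real_inner_smul_right, hx]
      ring
    simp only [LinearMap.comp_apply, LinearMap.transvection, LinearMap.coe_mk, AddHom.coe_mk,
      ContinuousLinearMap.coe_coe, innerSL_apply_apply, e2]
    simp only [_root_.add_apply, tens, ContinuousLinearMap.smulRight_apply, innerSL_apply_apply, hw,
      smul_sub]
    abel
  rw [ContinuousLinearMap.det, key, LinearMap.det_comp, LinearMap.transvection.det, dens, rK]
  congr 1
  simp only [ContinuousLinearMap.coe_coe, innerSL_apply_apply, hw, inner_sub_right, hx,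
    inner_grad hK (sph_ne x)]
  ring

lemma rK_pos {n : ℕ} {K : Set (Eu n)} (hK : IsSmoothConvexBody K) (x : Sph n) :
    0 < rK K (x : Eu n) := by
  set B : Eu n →L[ℝ] Eu n := hessA K (x : Eu n) + tens (x : Eu n) with hB
  let g : ℝ → ℝ := fun t => LinearMap.det ((t • B + (1 - t) • ContinuousLinearMap.id ℝ (Eu n) :
    Eu n →L[ℝ] Eu n) : Eu n →ₗ[ℝ] Eu n)
  have hg : Continuous g := by
    have h1 : Continuous fun t : ℝ => (t • B + (1 - t) • ContinuousLinearMap.id ℝ (Eu n)) := by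
      fun_prop
    exact ContinuousLinearMap.continuous_det.comp h1
  have hne : ∀ t ∈ Set.Icc (0:ℝ) 1, g t ≠ 0 := by
    intro t ht h0
    obtain ⟨v, hv, hv0⟩ := (Submodule.ne_bot_iff _).1 (LinearMap.bot_lt_ker_of_det_eq_zero h0).ne'
    have h1 := congrArg (fun u => ⟪u, v⟫_ℝ) (LinearMap.mem_ker.1 hv)
    simp only [ContinuousLinearMap.coe_coe, _root_.add_apply, _root_.smul_apply, inner_add_left,
      real_inner_smul_left, inner_zero_left, ContinuousLinearMap.id_apply] at h1
    have h2 := hK.posdef x v hv0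
    rw [← hB] at h2
    have h3 : 0 < ⟪v, v⟫_ℝ := real_inner_self_pos.2 hv0
    rcases eq_or_lt_of_le ht.1 with h | h
    · rw [← h] at h1; simp at h1; exact hv0 h1
    · nlinarith [mul_pos h h2, ht.2]
  by_contra hcon
  have h0 : g 0 = 1 := by simp [g]
  have h1 : g 1 = rK K (x : Eu n) := by simp [g, rK, hB]
  have := intermediate_value_Icc' (zero_le_one : (0:ℝ) ≤ 1) hg.continuousOn
  rw [h0, h1] at this
  obtain ⟨t, ht, h⟩ := this ⟨not_lt.1 hcon, zero_le_one⟩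
  exact hne t ht h

lemma dens_pos {n : ℕ} {K : Set (Eu n)} (hK : IsSmoothConvexBody K) (x : Sph n) :
    0 < dens K (x : Eu n) := mul_pos (hK.pos x) (rK_pos hK x)

lemma phi_injOn {n : ℕ} {K : Set (Eu n)} (hK : IsSmoothConvexBody K) :
    Set.InjOn (PhiK K) {(0 : Eu n)}ᶜ := by
  have hle : ∀ x y : Eu n, x ≠ 0 → y ≠ 0 → PhiK K x = PhiK K y → ‖x‖ ≤ ‖y‖ := by
    intro x y hx hy h
    have h1 := congrArg (fun u => ⟪x, u⟫_ℝ) h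
    simp only [PhiK, real_inner_smul_right, inner_grad hK hx] at h1
    have h2 := inner_grad_le hK x hy
    have h3 := sfn_pos hK hx
    have h4 := mul_le_mul_of_nonneg_left h2 (norm_nonneg y)
    rw [← h1] at h4
    exact le_of_mul_le_mul_right h4 h3
  intro x hx y hy h
  have hx : x ≠ 0 := hx
  have hy : y ≠ 0 := hy
  have hxy : ‖x‖ = ‖y‖ := le_antisymm (hle x y hx hy h) (hle y x hy hx h.symm)
  have hG : gradient (sfn K) x = gradient (sfn K) y := by
    simp only [PhiK, hxy] at h
    exact smul_right_injective _ (norm_pos_iff.2 hy).ne' h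
  -- h is linear on the segment between x and y
  set Y := gradient (sfn K) x with hY
  by_contra hne
  -- u unit vector
  have hnx : 0 < ‖x‖ := norm_pos_iff.2 hx
  let u : Sph n := ⟨‖x‖⁻¹ • x, by simp [norm_smul, hnx.ne']⟩
  have hu : (u : Eu n) = ‖x‖⁻¹ • x := rfl
  let v : Eu n := ‖x‖⁻¹ • y - u
  -- along the segment
  have hseg : ∀ t ∈ Set.Ioo (0:ℝ) 1, gradient (sfn K) ((u : Eu n) + t • v) = Y := by
    intro t ht
    have e : (u : Eu n) + t • v = ‖x‖⁻¹ • ((1 - t) • x + t • y) := by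
      simp only [v, hu, smul_sub, smul_add, smul_smul, sub_smul, one_smul]
      rw [mul_comm t]; abel
    have hin : ∀ z : Eu n, z ≠ 0 → z = x ∨ z = y → ⟪z, Y⟫_ℝ = sfn K z := by
      rintro z hz (rfl | rfl)
      · exact inner_grad hK hz
      · rw [hG]; exact inner_grad hK hz
    have hval : ⟪(1 - t) • x + t • y, Y⟫_ℝ = (1 - t) * sfn K x + t * sfn K y := by
      rw [inner_add_left, real_inner_smul_left, real_inner_smul_left, hin x hx (Or.inl rfl),
        hin y hy (Or.inr rfl)]
    have hpos : 0 < (1 - t) * sfn K x + t * sfn K y :=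
      add_pos (mul_pos (by linarith [ht.2]) (sfn_pos hK hx)) (mul_pos ht.1 (sfn_pos hK hy))
    have hz : (1 - t) • x + t • y ≠ 0 := by
      intro h0; rw [h0, inner_zero_left] at hval; linarith
    have hle2 : sfn K ((1 - t) • x + t • y) ≤ (1 - t) * sfn K x + t * sfn K y := by
      refine sfn_le hK _ fun w hw => ?_
      rw [inner_add_left, real_inner_smul_left, real_inner_smul_left]
      have h1 := inner_le_sfn hK x hw
      have h2 := inner_le_sfn hK y hw
      have := ht.1; have := ht.2
      nlinarith [mul_le_mul_of_nonneg_left h1 (by linarith : 0 ≤ 1 - t),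
        mul_le_mul_of_nonneg_left h2 ht.1.le]
    have hle3 := inner_grad_le hK ((1 - t) • x + t • y) hx
    rw [e, grad_smul hK (inv_pos.2 hnx) hz]
    have := grad_eq_of_max hK hz (w := Y) (r := 1)
      (fun z _ => by rw [one_mul]; exact inner_grad_le hK z hx) (by rw [one_mul]; linarith)
    rw [one_smul] at this
    exact this.symm
  have hgu : gradient (sfn K) (u : Eu n) = Y := grad_smul hK (inv_pos.2 hnx) hx
  -- derivative
  have hder : HasDerivAt (fun t : ℝ => gradient (sfn K) ((u : Eu n) + t • v))
      (hessA K (u : Eu n) v) 0 := by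
    have h2 : HasDerivAt (fun t : ℝ => (u : Eu n) + t • v) v 0 := by
      simpa using ((hasDerivAt_id (0:ℝ)).smul_const v).const_add (u : Eu n)
    have h3 : HasFDerivAt (gradient (sfn K)) (hessA K (u : Eu n)) ((u : Eu n) + (0:ℝ) • v) := by
      rw [zero_smul, add_zero]; exact grad_hasFDerivAt hK (sph_ne u)
    exact h3.comp_hasDerivAt (0:ℝ) h2
  have hder2 : HasDerivWithinAt (fun t : ℝ => gradient (sfn K) ((u : Eu n) + t • v))
      0 (Set.Ico 0 1) 0 := by
    refine (hasDerivWithinAt_const (0:ℝ) _ Y).congr ?_ ?_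
    · intro t ht
      rcases eq_or_lt_of_le ht.1 with h | h
      · rw [← h]; simp [hgu]
      · exact hseg t ⟨h, ht.2⟩
    · simp [hgu]
  have hA0 : hessA K (u : Eu n) v = 0 :=
    ((uniqueDiffOn_Ico (0:ℝ) 1) 0 (by simp)).eq_deriv _ hder.hasDerivWithinAt hder2
  have hv : v - ⟪(u : Eu n), v⟫_ℝ • (u : Eu n) = 0 := by
    by_contra hv
    have := hess_pos hK u hv
    rw [hA0, inner_zero_left] at this
    exact lt_irrefl _ this
  -- hence y is a multiple of x
  have hyu : ‖x‖⁻¹ • y = (1 + ⟪(u : Eu n), v⟫_ℝ) • (u : Eu n) := by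
    rw [sub_eq_zero] at hv
    rw [add_smul, one_smul, ← hv]; simp [v]
  set c := 1 + ⟪(u : Eu n), v⟫_ℝ
  have hyc : y = c • x := by
    have := congrArg (fun w => ‖x‖ • w) hyu
    simp only [hu, smul_smul, mul_inv_cancel₀ hnx.ne', one_smul] at this
    rw [this]; congr 1; field_simp
  have hcabs : |c| = 1 := by
    have := hxy
    rw [hyc, norm_smul, Real.norm_eq_abs] at this
    nlinarith
  have hcpos : 0 < c := by
    have h1 : ⟪y, Y⟫_ℝ = sfn K y := by rw [hG]; exact inner_grad hK hy
    have h2 : ⟪x, Y⟫_ℝ = sfn K x := inner_grad hK hx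
    have h3 := sfn_pos hK hy
    have h4 := sfn_pos hK hx
    rw [← h1, hyc, real_inner_smul_left, h2] at h3
    exact pos_of_mul_pos_left h3 h4.le
  rw [abs_of_pos hcpos] at hcabs
  rw [hcabs, one_smul] at hyc
  exact hne hyc.symm

/-- Every nonzero vector is a positive multiple of some gradient. -/
lemma grad_surj {n : ℕ} {K : Set (Eu n)} (hK : IsSmoothConvexBody K) {z : Eu n} (hz : z ≠ 0) :
    ∃ x : Sph n, ∃ r : ℝ, 0 < r ∧ z = r • gradient (sfn K) (x : Eu n) := by
  have hc : Continuous fun x : Sph n => ⟪(x : Eu n), z⟫_ℝ / sfn K (x : Eu n) := by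
    refine Continuous.div (by fun_prop) ?_ fun x => (hK.pos x).ne'
    rw [continuous_iff_continuousAt]
    intro x
    exact ((sfn_contDiffAt hK (sph_ne x)).continuousAt).comp continuous_subtype_val.continuousAt
  have hnz : 0 < ‖z‖ := norm_pos_iff.2 hz
  let z0 : Sph n := ⟨‖z‖⁻¹ • z, by simp [norm_smul, hnz.ne']⟩
  have : Nonempty (Sph n) := ⟨z0⟩
  obtain ⟨x, -, hx⟩ := isCompact_univ.exists_isMaxOn (Set.univ_nonempty) hc.continuousOn
  set r := ⟪(x : Eu n), z⟫_ℝ / sfn K (x : Eu n) with hr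
  have hmax : ∀ y : Sph n, ⟪(y : Eu n), z⟫_ℝ ≤ r * sfn K (y : Eu n) := by
    intro y
    have := hx (Set.mem_univ y)
    simp only [Set.mem_ofPred_eq] at this
    rwa [div_le_iff₀ (hK.pos y)] at this
  have hr0 : 0 < r := by
    have h1 := hmax z0
    have h2 : ⟪(z0 : Eu n), z⟫_ℝ = ‖z‖ := by
      simp only [z0, real_inner_smul_left, real_inner_self_eq_norm_sq]
      field_simp
    rw [h2] at h1
    exact pos_of_mul_pos_left (hnz.trans_le h1) (hK.pos z0).le
  refine ⟨x, r, hr0, grad_eq_of_max hK (sph_ne x) ?_ ?_⟩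
  · intro y hy
    have hny : 0 < ‖y‖ := norm_pos_iff.2 hy
    have h1 := hmax ⟨‖y‖⁻¹ • y, by simp [norm_smul, hny.ne']⟩
    simp only [real_inner_smul_left, sfn_smul hK (inv_nonneg.2 hny.le)] at h1
    rw [mul_left_comm] at h1
    exact le_of_mul_le_mul_left h1 (inv_pos.2 hny)
  · rw [hr, div_mul_cancel₀ _ (hK.pos x).ne']


lemma sph_cont_sfn {n : ℕ} {K : Set (Eu n)} (hK : IsSmoothConvexBody K) :
    Continuous fun x : Sph n => sfn K (x : Eu n) :=
  continuous_iff_continuousAt.2 fun x =>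
    ((sfn_contDiffAt hK (sph_ne x)).continuousAt).comp continuous_subtype_val.continuousAt

lemma sph_cont_grad {n : ℕ} {K : Set (Eu n)} (hK : IsSmoothConvexBody K) :
    Continuous fun x : Sph n => gradient (sfn K) (x : Eu n) :=
  continuous_iff_continuousAt.2 fun x =>
    ((grad_contDiffAt hK (sph_ne x)).continuousAt).comp continuous_subtype_val.continuousAt

lemma sph_cont_hess {n : ℕ} {K : Set (Eu n)} (hK : IsSmoothConvexBody K) :
    Continuous fun x : Sph n => hessA K (x : Eu n) :=
  continuous_iff_continuousAt.2 fun x =>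
    ((hess_contDiffAt hK (sph_ne x)).continuousAt).comp continuous_subtype_val.continuousAt

lemma sph_cont_dens {n : ℕ} {K : Set (Eu n)} (hK : IsSmoothConvexBody K) :
    Continuous fun x : Sph n => dens K (x : Eu n) := by
  refine (sph_cont_sfn hK).mul ?_
  have h1 : Continuous fun x : Sph n => hessA K (x : Eu n) + tens (x : Eu n) := by
    refine (sph_cont_hess hK).add ?_
    unfold tens
    have : Continuous fun x : Sph n => innerSL ℝ (x : Eu n) := by fun_prop
    exact (ContinuousLinearMap.smulRightL ℝ (Eu n) (Eu n)).continuous₂.comp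
      (this.prodMk continuous_subtype_val)
  exact ContinuousLinearMap.continuous_det.comp h1

instance sphMeas_fin (n : ℕ) : IsFiniteMeasure (sphMeas n) := by
  unfold sphMeas; infer_instance

lemma sph_integrable {n : ℕ} {F : Type*} [NormedAddCommGroup F] 
    {f : Sph n → F} (hf : Continuous f) : Integrable f (sphMeas n) := by
  rw [← integrableOn_univ]
  exact hf.continuousOn.integrableOn_compact isCompact_univ

lemma polar_mp (n : ℕ) : MeasurePreserving (homeomorphUnitSphereProd (Eu n))
    ((volume : Measure (Eu n)).comap (↑)) ((sphMeas n).prod (Measure.volumeIoiPow n)) := by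
  have := (volume : Measure (Eu n)).measurePreserving_homeomorphUnitSphereProd
  have e : Module.finrank ℝ (Eu n) - 1 = n := by simp
  rw [e] at this
  exact this

lemma polar_lintegral {n : ℕ} (F : Eu n → ℝ≥0∞) :
    ∫⁻ x, F x = ∫⁻ p : Sph n × Set.Ioi (0:ℝ), F ((p.2 : ℝ) • (p.1 : Eu n))
      ∂((sphMeas n).prod (Measure.volumeIoiPow n)) := by
  rw [← (polar_mp n).lintegral_comp_emb (Homeomorph.measurableEmbedding _)]
  have e : ∀ x : ({(0 : Eu n)}ᶜ : Set (Eu n)),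
      ((homeomorphUnitSphereProd (Eu n) x).2 : ℝ) • ((homeomorphUnitSphereProd (Eu n) x).1 : Eu n)
      = x := by
    intro x
    rw [← homeomorphUnitSphereProd_symm_apply_coe, Homeomorph.symm_apply_apply]
  simp only [e]
  rw [lintegral_subtype_comap (measurableSet_singleton _).compl, restrict_compl_singleton]

lemma polar_integral {n : ℕ} (F : Eu n → ℝ) :
    ∫ x, F x = ∫ p : Sph n × Set.Ioi (0:ℝ), F ((p.2 : ℝ) • (p.1 : Eu n))
      ∂((sphMeas n).prod (Measure.volumeIoiPow n)) := by
  rw [← (polar_mp n).integral_comp (Homeomorph.measurableEmbedding _)]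
  have e : ∀ x : ({(0 : Eu n)}ᶜ : Set (Eu n)),
      ((homeomorphUnitSphereProd (Eu n) x).2 : ℝ) • ((homeomorphUnitSphereProd (Eu n) x).1 : Eu n)
      = x := by
    intro x
    rw [← homeomorphUnitSphereProd_symm_apply_coe, Homeomorph.symm_apply_apply]
  simp only [e]
  rw [integral_subtype_comap (measurableSet_singleton _).compl, restrict_compl_singleton]

/-- The open star body (minus the origin) with radial function `φ`. -/
def EStar {n : ℕ} (φ : Sph n → ℝ) : Set (Eu n) :=
  {x | ∃ u : Sph n, ∃ r : ℝ, 0 < r ∧ r < φ u ∧ x = r • (u : Eu n)}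

lemma polar_unique {n : ℕ} {u v : Sph n} {r s : ℝ} (hr : 0 < r) (hs : 0 < s)
    (h : r • (u : Eu n) = s • (v : Eu n)) : r = s ∧ u = v := by
  have h1 : r = s := by
    have := congrArg norm h
    simpa only [norm_smul, sph_norm, mul_one, Real.norm_of_nonneg hr.le,
      Real.norm_of_nonneg hs.le] using this
  refine ⟨h1, Subtype.ext ?_⟩
  rw [h1] at h
  exact smul_right_injective _ hs.ne' h

lemma estar_mem {n : ℕ} {φ : Sph n → ℝ} {u : Sph n} {r : ℝ} (hr : 0 < r) :
    r • (u : Eu n) ∈ EStar φ ↔ r < φ u := by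
  constructor
  · rintro ⟨v, s, hs, h1, h2⟩
    obtain ⟨rfl, rfl⟩ := polar_unique hr hs h2
    exact h1
  · intro h; exact ⟨u, r, hr, h, rfl⟩

lemma estar_ne {n : ℕ} {φ : Sph n → ℝ} {x : Eu n} (hx : x ∈ EStar φ) : x ≠ 0 := by
  obtain ⟨u, r, hr, -, rfl⟩ := hx
  exact smul_ne_zero hr.ne' (sph_ne u)

lemma estar_meas {n : ℕ} {φ : Sph n → ℝ} (hφ : Continuous φ) : MeasurableSet (EStar φ) := by
  have hS : MeasurableSet {p : Sph n × Set.Ioi (0:ℝ) | (p.2 : ℝ) < φ p.1} :=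
    measurableSet_lt (by fun_prop) (hφ.measurable.comp measurable_fst)
  have h2 : EStar φ = Subtype.val '' ((homeomorphUnitSphereProd (Eu n)).symm ''
      {p : Sph n × Set.Ioi (0:ℝ) | (p.2 : ℝ) < φ p.1}) := by
    ext x
    constructor
    · rintro ⟨u, r, hr, h, rfl⟩
      exact ⟨_, ⟨(u, ⟨r, hr⟩), h, rfl⟩, by simp⟩
    · rintro ⟨_, ⟨⟨u, ⟨r, hr⟩⟩, h, rfl⟩, rfl⟩
      exact ⟨u, r, hr, h, by simp⟩
  rw [h2]
  exact (measurableSet_singleton _).compl.subtype_image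
    ((Homeomorph.measurableEmbedding _).measurableSet_image.2 hS)

lemma phi_estar_meas {n : ℕ} {K : Set (Eu n)} (hK : IsSmoothConvexBody K)
    {φ : Sph n → ℝ} (hφ : Continuous φ) : MeasurableSet (PhiK K '' EStar φ) :=
  measurable_image_of_fderivWithin (estar_meas hφ)
    (fun _ hx => (phi_differentiableAt hK (estar_ne hx)).hasFDerivAt.hasFDerivWithinAt)
    ((phi_injOn hK).mono fun _ hx => estar_ne hx)

lemma phi_estar_vol {n : ℕ} {K : Set (Eu n)} (hK : IsSmoothConvexBody K)
    {φ : Sph n → ℝ} (hφ : Continuous φ) (hpos : ∀ u, 0 < φ u) :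
    volume (PhiK K '' EStar φ) =
      ENNReal.ofReal (∫ x : Sph n, dens K (x : Eu n) * (φ x ^ (n + 1) / (n + 1)) ∂sphMeas n) := by
  rw [← lintegral_abs_det_fderiv_eq_addHaar_image volume (estar_meas hφ)
    (fun x hx => (phi_differentiableAt hK (estar_ne hx)).hasFDerivAt.hasFDerivWithinAt)
    ((phi_injOn hK).mono fun _ hx => estar_ne hx)]
  rw [← lintegral_indicator (estar_meas hφ), polar_lintegral]
  have hdet : ∀ (u : Sph n) (r : ℝ), 0 < r →
      |(fderiv ℝ (PhiK K) (r • (u : Eu n))).det| = dens K (u : Eu n) := by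
    intro u r hr
    rw [fderiv_hom (fun t ht x hx => phi_smul hK ht hx) (fun x hx => phi_differentiableAt hK hx)
      hr (sph_ne u), phi_det_sph hK, abs_of_pos (dens_pos hK u)]
  have hS : MeasurableSet {p : Sph n × Set.Ioi (0:ℝ) | (p.2 : ℝ) < φ p.1} :=
    measurableSet_lt (by fun_prop) (hφ.measurable.comp measurable_fst)
  have e : ∀ p : Sph n × Set.Ioi (0:ℝ), (EStar φ).indicator
      (fun x => ENNReal.ofReal |(fderiv ℝ (PhiK K) x).det|) ((p.2 : ℝ) • (p.1 : Eu n)) =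
      {p : Sph n × Set.Ioi (0:ℝ) | (p.2 : ℝ) < φ p.1}.indicator
        (fun p => ENNReal.ofReal (dens K (p.1 : Eu n))) p := by
    intro p
    by_cases h : (p.2 : ℝ) < φ p.1
    · rw [Set.indicator_of_mem ((estar_mem p.2.2).2 h), Set.indicator_of_mem (by exact h),
        hdet _ _ p.2.2]
    · rw [Set.indicator_of_notMem (fun h' => h ((estar_mem p.2.2).1 h')),
        Set.indicator_of_notMem (by exact h)]
  simp only [e]
  have hm : Measurable ({p : Sph n × Set.Ioi (0:ℝ) | (p.2 : ℝ) < φ p.1}.indicator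
        (fun p => ENNReal.ofReal (dens K (p.1 : Eu n)))) :=
    Measurable.indicator
      (((sph_cont_dens hK).measurable.comp measurable_fst).ennreal_ofReal) hS
  rw [lintegral_prod _ hm.aemeasurable]
  rw [ofReal_integral_eq_lintegral_ofReal]
  · refine lintegral_congr fun u => ?_
    have e2 : ∀ r : Set.Ioi (0:ℝ), ({p : Sph n × Set.Ioi (0:ℝ) | (p.2 : ℝ) < φ p.1}.indicator
        (fun p => ENNReal.ofReal (dens K (p.1 : Eu n)))) (u, r) =
        (Set.Iio (⟨φ u, hpos u⟩ : Set.Ioi (0:ℝ))).indicator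
          (fun _ => ENNReal.ofReal (dens K (u : Eu n))) r := by
      intro r
      by_cases h : (r : ℝ) < φ u
      · rw [Set.indicator_of_mem (by exact h), Set.indicator_of_mem (by exact h)]
      · rw [Set.indicator_of_notMem (by exact h), Set.indicator_of_notMem (by exact h)]
    simp only [e2]
    rw [lintegral_indicator measurableSet_Iio, lintegral_const,
      Measure.restrict_apply MeasurableSet.univ, Set.univ_inter, Measure.volumeIoiPow_apply_Iio,
      ENNReal.ofReal_mul (dens_pos hK u).le]
  · exact sph_integrable ((sph_cont_dens hK).mul ((hφ.pow _).div_const _))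
  · refine Filter.Eventually.of_forall fun u => ?_
    have := hpos u
    have := dens_pos hK u
    simp only [Pi.zero_apply]; positivity


lemma taylor_aux {G G' G'' : ℝ → ℝ} {T : ℝ} (h0 : G 0 = 0) (h0' : G' 0 = 0)
    (h1 : ∀ t ∈ Set.Icc 0 T, HasDerivAt G (G' t) t)
    (h2 : ∀ t ∈ Set.Icc 0 T, HasDerivAt G' (G'' t) t)
    (h3 : ∀ t ∈ Set.Icc 0 T, 0 ≤ G'' t) : ∀ t ∈ Set.Icc 0 T, 0 ≤ G t := by
  have m1 : MonotoneOn G' (Set.Icc 0 T) := by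
    refine monotoneOn_of_deriv_nonneg (convex_Icc _ _)
      (fun t ht => (h2 t ht).continuousAt.continuousWithinAt)
      (fun t ht => (h2 t (interior_subset ht)).differentiableAt.differentiableWithinAt) ?_
    intro t ht
    rw [(h2 t (interior_subset ht)).deriv]; exact h3 t (interior_subset ht)
  have m2 : MonotoneOn G (Set.Icc 0 T) := by
    refine monotoneOn_of_deriv_nonneg (convex_Icc _ _)
      (fun t ht => (h1 t ht).continuousAt.continuousWithinAt)
      (fun t ht => (h1 t (interior_subset ht)).differentiableAt.differentiableWithinAt) ?_
    intro t ht
    have ht := interior_subset ht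
    rw [(h1 t ht).deriv, ← h0']
    exact m1 ⟨le_rfl, ht.1.trans ht.2⟩ ht ht.1
  intro t ht
  rw [← h0]
  exact m2 ⟨le_rfl, ht.1.trans ht.2⟩ ht ht.1

lemma taylor_half {n : ℕ} {K : Set (Eu n)} (hK : IsSmoothConvexBody K) (e : Eu n)
    {η : ℝ} (hη : 0 < η) : ∃ T : ℝ, 0 < T ∧ ∀ x : Sph n, ∀ t ∈ Set.Icc (0:ℝ) T,
      sfn K ((x : Eu n) + t • e) ≤ sfn K (x : Eu n) + t * ⟪gradient (sfn K) (x : Eu n), e⟫_ℝ +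
        t ^ 2 / 2 * (⟪hessA K (x : Eu n) e, e⟫_ℝ + η) := by
  have key : ∀ᶠ t : ℝ in 𝓝 0, ∀ x ∈ (Set.univ : Set (Sph n)), (x : Eu n) + t • e ≠ 0 ∧
      ⟪hessA K ((x : Eu n) + t • e) e, e⟫_ℝ < ⟪hessA K (x : Eu n) e, e⟫_ℝ + η := by
    refine isCompact_univ.eventually_forall_of_forall_eventually fun x _ => ?_
    have hc : ContinuousAt (fun z : ℝ × Sph n => (z.2 : Eu n) + z.1 • e) (0, x) := by fun_prop
    have hx : (x : Eu n) + (0:ℝ) • e ≠ 0 := by simpa using sph_ne x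
    have h1 : ∀ᶠ z : ℝ × Sph n in 𝓝 (0, x), (z.2 : Eu n) + z.1 • e ≠ 0 :=
      hc.eventually_ne hx
    have hA : ContinuousAt (fun z : ℝ × Sph n => hessA K ((z.2 : Eu n) + z.1 • e)) (0, x) :=
      ContinuousAt.comp (g := hessA K) (f := fun z : ℝ × Sph n => (z.2 : Eu n) + z.1 • e)
        (hess_contDiffAt hK hx).continuousAt hc
    have hA2 : ContinuousAt (fun z : ℝ × Sph n => hessA K (z.2 : Eu n)) (0, x) :=
      ((sph_cont_hess hK).comp continuous_snd).continuousAt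
    have h2 : ∀ᶠ z : ℝ × Sph n in 𝓝 (0, x), ⟪hessA K ((z.2 : Eu n) + z.1 • e) e, e⟫_ℝ <
        ⟪hessA K (z.2 : Eu n) e, e⟫_ℝ + η := by
      refine ContinuousAt.eventually_lt ?_ ?_ ?_
      · exact (hA.clm_apply continuousAt_const).inner continuousAt_const
      · exact ((hA2.clm_apply continuousAt_const).inner continuousAt_const).add continuousAt_const
      · simp [hη]
    exact h1.and h2
  obtain ⟨T, hT, hball⟩ := Metric.eventually_nhds_iff.1 key
  refine ⟨T / 2, by linarith, fun x => ?_⟩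
  have hin : ∀ t ∈ Set.Icc 0 (T / 2), (x : Eu n) + t • e ≠ 0 ∧
      ⟪hessA K ((x : Eu n) + t • e) e, e⟫_ℝ < ⟪hessA K (x : Eu n) e, e⟫_ℝ + η := by
    intro t ht
    refine hball (y := t) ?_ x (Set.mem_univ _)
    rw [Real.dist_eq, sub_zero, abs_of_nonneg ht.1]; linarith [ht.2]
  have hline : ∀ t : ℝ, HasDerivAt (fun t : ℝ => (x : Eu n) + t • e) e t := fun t => by
    simpa using ((hasDerivAt_id t).smul_const e).const_add (x : Eu n)
  set a := ⟪gradient (sfn K) (x : Eu n), e⟫_ℝ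
  set B := ⟪hessA K (x : Eu n) e, e⟫_ℝ + η
  have := taylor_aux (T := T / 2)
    (G := fun t => sfn K (x : Eu n) + t * a + t ^ 2 / 2 * B - sfn K ((x : Eu n) + t • e))
    (G' := fun t => a + t * B - ⟪gradient (sfn K) ((x : Eu n) + t • e), e⟫_ℝ)
    (G'' := fun t => B - ⟪hessA K ((x : Eu n) + t • e) e, e⟫_ℝ) (by simp) (by simp [a]) ?_ ?_ ?_
  · intro t ht
    linarith [this t ht]
  · intro t ht
    have h1 : HasDerivAt (fun t : ℝ => sfn K ((x : Eu n) + t • e))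
        (⟪gradient (sfn K) ((x : Eu n) + t • e), e⟫_ℝ) t := by
      have := (sfn_hasGradientAt hK (hin t ht).1).hasFDerivAt.comp_hasDerivAt t (hline t)
      exact this
    have h2 : HasDerivAt (fun t : ℝ => sfn K (x : Eu n) + t * a + t ^ 2 / 2 * B)
        (a + t * B) t := by
      have := (((hasDerivAt_id t).mul_const a).const_add (sfn K (x : Eu n))).add
        ((((hasDerivAt_id t).pow 2).div_const 2).mul_const B)
      refine HasDerivAt.congr_deriv this ?_
      simp
    exact h2.sub h1
  · intro t ht
    have h1 : HasDerivAt (fun t : ℝ => ⟪gradient (sfn K) ((x : Eu n) + t • e), e⟫_ℝ)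
        (⟪hessA K ((x : Eu n) + t • e) e, e⟫_ℝ) t := by
      have := ((grad_hasFDerivAt hK (hin t ht).1).comp_hasDerivAt t (hline t)).inner ℝ
        (hasDerivAt_const t e)
      simpa using this
    have h2 : HasDerivAt (fun t : ℝ => a + t * B) B t := by
      simpa using ((hasDerivAt_id t).mul_const B).const_add a
    exact h2.sub h1
  · intro t ht
    have := (hin t ht).2
    linarith

lemma taylor_full {n : ℕ} {K : Set (Eu n)} (hK : IsSmoothConvexBody K) (e : Eu n)
    {η : ℝ} (hη : 0 < η) : ∃ T : ℝ, 0 < T ∧ ∀ x : Sph n, ∀ t : ℝ, |t| ≤ T →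
      sfn K ((x : Eu n) + t • e) ≤ sfn K (x : Eu n) + t * ⟪gradient (sfn K) (x : Eu n), e⟫_ℝ +
        t ^ 2 / 2 * (⟪hessA K (x : Eu n) e, e⟫_ℝ + η) := by
  obtain ⟨T1, h1, H1⟩ := taylor_half hK e hη
  obtain ⟨T2, h2, H2⟩ := taylor_half hK (-e) hη
  refine ⟨min T1 T2, lt_min h1 h2, fun x t ht => ?_⟩
  have ht1 := ht.trans (min_le_left _ _)
  have ht2 := ht.trans (min_le_right _ _)
  rcases le_total 0 t with h | h
  · exact H1 x t ⟨h, (abs_of_nonneg h) ▸ ht1⟩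
  · have := H2 x (-t) ⟨by linarith, (abs_of_nonpos h) ▸ ht2⟩
    simpa using this


lemma ev_small {n : ℕ} {F : ℝ × Sph n → ℝ} (hF : Continuous F) {b : ℝ}
    (h0 : ∀ x, F (0, x) < b) : ∀ᶠ d in 𝓝 (0:ℝ), ∀ x : Sph n, F (d, x) < b := by
  have := (isCompact_univ (X := Sph n)).eventually_forall_of_forall_eventually (x₀ := (0:ℝ))
    (P := fun d x => F (d, x) < b) (fun x _ => hF.continuousAt.eventually_lt_const (h0 x))
  filter_upwards [this] with d hd x
  exact hd x (Set.mem_univ _)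

lemma exp_rem (N : ℕ) : ∃ R : ℝ × ℝ × ℝ → ℝ, Continuous R ∧ ∀ d f g : ℝ,
    (1 + d * f + d ^ 2 * g) ^ N = 1 + N * d * f + d ^ 2 * (N * g + N * (N - 1) / 2 * f ^ 2) +
      d ^ 3 * R (d, f, g) := by
  induction N with
  | zero => exact ⟨fun _ => 0, continuous_const, fun d f g => by simp⟩
  | succ N ih =>
    obtain ⟨R, hR, h⟩ := ih
    refine ⟨fun z => R z * (1 + z.1 * z.2.1 + z.1 ^ 2 * z.2.2) + N * z.2.1 * z.2.2 +
      (N * z.2.2 + N * (N - 1) / 2 * z.2.1 ^ 2) * (z.2.1 + z.1 * z.2.2), by fun_prop, ?_⟩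
    intro d f g
    rw [pow_succ, h]
    push_cast
    ring

lemma int_exp {n : ℕ} (N : ℕ) {w f g : Sph n → ℝ} (hw : Continuous w) (hf : Continuous f)
    (hg : Continuous g) : ∃ C : ℝ, ∀ d : ℝ, |d| ≤ 1 →
    |∫ x, w x * (1 + d * f x + d ^ 2 * g x) ^ N ∂sphMeas n -
      ((∫ x, w x ∂sphMeas n) + N * d * (∫ x, w x * f x ∂sphMeas n) +
        d ^ 2 * ∫ x, w x * (N * g x + N * (N - 1) / 2 * f x ^ 2) ∂sphMeas n)| ≤ C * |d| ^ 3 := by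
  obtain ⟨R, hR, h⟩ := exp_rem N
  have hc : Continuous fun z : ℝ × Sph n => w z.2 * R (z.1, f z.2, g z.2) := by fun_prop
  obtain ⟨B, hB⟩ := ((isCompact_Icc (a := (-1:ℝ)) (b := 1)).prod
    (isCompact_univ (X := Sph n))).exists_bound_of_continuousOn hc.continuousOn
  refine ⟨B * (sphMeas n).real Set.univ, fun d hd => ?_⟩
  have hRd : Continuous fun x : Sph n => w x * R (d, f x, g x) := by fun_prop
  have e : ∫ x, w x * (1 + d * f x + d ^ 2 * g x) ^ N ∂sphMeas n =
      ((∫ x, w x ∂sphMeas n) + N * d * (∫ x, w x * f x ∂sphMeas n) +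
        d ^ 2 * ∫ x, w x * (N * g x + N * (N - 1) / 2 * f x ^ 2) ∂sphMeas n) +
        d ^ 3 * ∫ x, w x * R (d, f x, g x) ∂sphMeas n := by
    rw [← integral_const_mul, ← integral_const_mul, ← integral_const_mul,
      ← integral_add, ← integral_add, ← integral_add]
    · refine integral_congr_ae (Filter.Eventually.of_forall fun x => ?_)
      simp only [h]; ring
    all_goals exact sph_integrable (by fun_prop)
  rw [e, add_sub_cancel_left, abs_mul, abs_pow, mul_comm]
  refine mul_le_mul_of_nonneg_right ?_ (by positivity)
  have := norm_integral_le_of_norm_le_const (μ := sphMeas n) (f := fun x => w x * R (d, f x, g x))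
    (C := B) (Filter.Eventually.of_forall fun x => hB (d, x) ⟨abs_le.1 hd, Set.mem_univ _⟩)
  exact this

/-- The inclusion step. -/
lemma incl_half {n : ℕ} {K : Set (Eu n)} (hK : IsSmoothConvexBody K) (e : Eu n) (c : ℝ)
    {f a k : Sph n → ℝ} (hf : ∀ x, f x = ⟪gradient (sfn K) (x : Eu n), e⟫_ℝ - c)
    (ha : ∀ x, a x = ⟪hessA K (x : Eu n) e, e⟫_ℝ)
    {η : ℝ} (hη : 0 < η)
    (hk : ∀ x, k x = f x ^ 2 + sfn K (x : Eu n) * a x / 2 + η / 2) :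
    ∀ᶠ d in 𝓝 (0:ℝ), (∀ x, 0 < 1 + d * f x + d ^ 2 * (f x ^ 2 - η)) ∧
      ∀ z ∈ PhiK K '' EStar (fun x => 1 + d * f x + d ^ 2 * (f x ^ 2 - η)), ∀ x : Sph n,
        ⟪(x : Eu n), z⟫_ℝ ≤ sfn K (x : Eu n) * (1 + d * f x + d ^ 2 * k x) := by
  have hcf : Continuous f := by
    have : f = fun x : Sph n => ⟪gradient (sfn K) (x : Eu n), e⟫_ℝ - c := funext hf
    rw [this]
    exact ((sph_cont_grad hK).inner continuous_const).sub continuous_const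
  have hca : Continuous a := by
    have : a = fun x : Sph n => ⟪hessA K (x : Eu n) e, e⟫_ℝ := funext ha
    rw [this]
    exact ((sph_cont_hess hK).clm_apply continuous_const).inner continuous_const
  have hch := sph_cont_sfn hK
  set h : Sph n → ℝ := fun x => sfn K (x : Eu n) with hh
  have hck : Continuous k := by
    have : k = fun x => f x ^ 2 + h x * a x / 2 + η / 2 := funext hk
    rw [this]; fun_prop
  obtain ⟨B, hB⟩ := isCompact_univ.exists_bound_of_continuousOn hch.continuousOn
  have hB0 : 0 ≤ |B| := abs_nonneg B
  have hhB : ∀ x, h x ≤ |B| := fun x => (le_abs_self _).trans ((hB x trivial).trans (le_abs_self _))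
  set η1 := η / (|B| + 1) with hη1
  have hη1p : 0 < η1 := by positivity
  have hη1h : ∀ x, h x * η1 < η := by
    intro x
    have h1 : (|B| + 1) * η1 = η := by rw [hη1]; field_simp
    nlinarith [hhB x]
  obtain ⟨T, hT, HT⟩ := taylor_full hK e hη1p
  have c1 := ev_small (F := fun z : ℝ × Sph n =>
    - (1 + z.1 * f z.2 + z.1 ^ 2 * (f z.2 ^ 2 - η))) (b := 0) (by fun_prop) (by simp)
  have c2 := ev_small (F := fun z : ℝ × Sph n =>
    - z.1 * f z.2 ^ 3 - η * (1 - z.1 * f z.2)) (b := 0) (by fun_prop) (by intro x; simpa using hη)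
  have c3 := ev_small (F := fun z : ℝ × Sph n =>
    - (1 - z.1 * f z.2)) (b := 0) (by fun_prop) (by simp)
  have c4 := ev_small (F := fun z : ℝ × Sph n =>
    - (1 + z.1 * f z.2 + z.1 ^ 2 * k z.2)) (b := 0) (by fun_prop) (by simp)
  have c5 := ev_small (F := fun z : ℝ × Sph n =>
    |h z.2 * (1 + z.1 * f z.2 + z.1 ^ 2 * k z.2) * z.1|) (b := T) (by fun_prop) (by intro x; simpa using hT)
  have c6 := ev_small (F := fun z : ℝ × Sph n =>
    z.1 * k z.2 * f z.2 + h z.2 / 2 * (((1 + z.1 * f z.2 + z.1 ^ 2 * k z.2) ^ 2 - 1) * a z.2 +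
      (1 + z.1 * f z.2 + z.1 ^ 2 * k z.2) ^ 2 * η1)) (b := η / 2) (by fun_prop)
    (by intro x; simp; linarith [hη1h x])
  filter_upwards [c1, c2, c3, c4, c5, c6] with d d1 d2 d3 d4 d5 d6
  refine ⟨fun x => by linarith [d1 x], ?_⟩
  rintro z ⟨_, ⟨x1, r, hr, hr2, rfl⟩, rfl⟩ x
  rw [phi_smul hK hr (sph_ne x1), PhiK, sph_norm, one_smul, real_inner_smul_right]
  have e2 := d2 x1
  have e3 := d3 x1
  have e4 := d4 x
  have e5 := d5 x
  have e6 := d6 x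
  have ekx := hk x
  set σ := 1 + d * f x + d ^ 2 * k x with hσ
  have hσ0 : 0 < σ := by linarith
  have hhx : 0 < h x := hK.pos x
  have hφ : (1 + d * f x1 + d ^ 2 * (f x1 ^ 2 - η)) * (1 - d * f x1) ≤ 1 := by
    have := mul_le_mul_of_nonneg_left e2.le (sq_nonneg d)
    linarith
  have htay := HT x (h x * σ * d) e5.le
  have hgl := inner_grad_le hK ((x : Eu n) + (h x * σ * d) • e) (sph_ne x1)
  rw [inner_add_left, real_inner_smul_left] at hgl
  have hf1 := hf x1
  rw [real_inner_comm] at hf1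
  have hfx := hf x
  have hax := ha x
  have hs : h x + (h x * σ * d) * f x + (h x * σ * d) ^ 2 / 2 * (a x + η1) ≤ h x * σ := by
    have : 1 + σ * d * f x + h x * σ ^ 2 * d ^ 2 / 2 * (a x + η1) ≤ σ := by
      have e7 := mul_le_mul_of_nonneg_left e6.le (sq_nonneg d)
      have e8 : σ * d * f x = d * f x + d ^ 2 * f x ^ 2 + d ^ 2 * (d * k x * f x) := by
        rw [hσ]; ring
      have e9 : d ^ 2 * k x = d ^ 2 * f x ^ 2 + d ^ 2 * (h x * a x / 2) + d ^ 2 * (η / 2) := by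
        rw [ekx]; ring
      rw [e8]
      clear_value σ
      linarith
    have e10 := mul_le_mul_of_nonneg_left this hhx.le
    clear_value σ
    linarith
  have hs0 : 0 < h x * σ := mul_pos hhx hσ0
  have hY : ⟪(x : Eu n), gradient (sfn K) (x1 : Eu n)⟫_ℝ ≤ h x * σ * (1 - d * f x1) := by
    have q1 : ⟪e, gradient (sfn K) (x1 : Eu n)⟫_ℝ = f x1 + c := by linarith
    have q2 : ⟪gradient (sfn K) (x : Eu n), e⟫_ℝ = f x + c := by linarith
    rw [q1] at hgl
    rw [q2, ← hax] at htay
    change _ ≤ h x + _ + _ at htay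
    clear_value σ
    linarith
  calc r * ⟪(x : Eu n), gradient (sfn K) (x1 : Eu n)⟫_ℝ ≤ r * (h x * σ * (1 - d * f x1)) :=
        mul_le_mul_of_nonneg_left hY hr.le
    _ = h x * σ * (r * (1 - d * f x1)) := by ring
    _ ≤ h x * σ * 1 := by
        refine mul_le_mul_of_nonneg_left ?_ hs0.le
        refine le_trans ?_ hφ
        exact mul_le_mul_of_nonneg_right hr2.le (by linarith)
    _ = h x * σ := mul_one _

lemma bm_applied {n : ℕ} {K : Set (Eu n)} (hK : IsSmoothConvexBody K)
    {p q s1 s2 ψ : Sph n → ℝ} (hp : Continuous p) (hq : Continuous q) (hψ : Continuous ψ)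
    (hp0 : ∀ x, 0 < p x) (hq0 : ∀ x, 0 < q x) (hψ0 : ∀ x, 0 < ψ x)
    (H1 : ∀ z ∈ PhiK K '' EStar p, ∀ x : Sph n, ⟪(x : Eu n), z⟫_ℝ ≤ sfn K (x : Eu n) * s1 x)
    (H2 : ∀ z ∈ PhiK K '' EStar q, ∀ x : Sph n, ⟪(x : Eu n), z⟫_ℝ ≤ sfn K (x : Eu n) * s2 x)
    (H3 : ∀ x, (s1 x + s2 x) / 2 < ψ x) :
    (∫ x : Sph n, dens K (x : Eu n) * p x ^ (n + 1) ∂sphMeas n) *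
      (∫ x : Sph n, dens K (x : Eu n) * q x ^ (n + 1) ∂sphMeas n) ≤
      (∫ x : Sph n, dens K (x : Eu n) * ψ x ^ (n + 1) ∂sphMeas n) ^ 2 := by
  have hbm := bm (phi_estar_meas hK hp) (phi_estar_meas hK hq)
    ((measurableSet_singleton (0 : Eu n)).union (phi_estar_meas hK hψ)) (by
      intro z hz w hw
      by_cases h0 : (1/2:ℝ) • (z + w) = 0
      · exact Or.inl h0
      · right
        obtain ⟨x, r, hr, h⟩ := grad_surj hK h0
        refine ⟨r • (x : Eu n), ⟨x, r, hr, ?_, rfl⟩, ?_⟩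
        · have h1 := H1 z hz x
          have h2 := H2 w hw x
          have h3 := congrArg (fun u => ⟪(x : Eu n), u⟫_ℝ) h
          simp only [real_inner_smul_right, inner_add_right, inner_grad hK (sph_ne x)] at h3
          have h4 := hK.pos x
          have h5 : sfn K (x : Eu n) * r ≤ sfn K (x : Eu n) * ((s1 x + s2 x) / 2) := by nlinarith
          exact (le_of_mul_le_mul_left h5 h4).trans_lt (H3 x)
        · rw [phi_smul hK hr (sph_ne x), PhiK, sph_norm, one_smul, h])
  have hC : volume ({(0 : Eu n)} ∪ PhiK K '' EStar ψ) = volume (PhiK K '' EStar ψ) := by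
    refine le_antisymm ((measure_union_le _ _).trans ?_) (measure_mono Set.subset_union_right)
    rw [measure_singleton, zero_add]
  rw [hC, phi_estar_vol hK hp hp0, phi_estar_vol hK hq hq0, phi_estar_vol hK hψ hψ0] at hbm
  have hnn : ∀ {p : Sph n → ℝ}, (∀ x, 0 < p x) →
      0 ≤ ∫ x : Sph n, dens K (x : Eu n) * (p x ^ (n + 1) / (n + 1)) ∂sphMeas n := by
    intro p hp
    refine integral_nonneg fun x => ?_
    have := hp x
    have := dens_pos hK x
    simp only [Pi.zero_apply]; positivity
  rw [← ENNReal.ofReal_mul (hnn hp0), ← ENNReal.ofReal_pow (hnn hψ0),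
    ENNReal.ofReal_le_ofReal_iff (sq_nonneg _)] at hbm
  simp only [← mul_div_assoc, integral_div] at hbm
  have hN : (0:ℝ) < n + 1 := by positivity
  rw [div_mul_eq_mul_div, div_div, div_pow, ← sq, div_le_div_iff_of_pos_right (by positivity)] at hbm
  exact hbm

lemma sph_nonempty (n : ℕ) : Nonempty (Sph n) :=
  ⟨⟨EuclideanSpace.single 0 1, by simp⟩⟩

instance sphMeas_neZero (n : ℕ) : NeZero (sphMeas n) := ⟨Measure.toSphere_ne_zero _⟩

lemma dens_int_pos {n : ℕ} {K : Set (Eu n)} (hK : IsSmoothConvexBody K) :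
    0 < ∫ x : Sph n, dens K (x : Eu n) ∂sphMeas n := by
  rw [integral_pos_iff_support_of_nonneg (fun x => (dens_pos hK x).le)
    (sph_integrable (sph_cont_dens hK))]
  have : (Function.support fun x : Sph n => dens K (x : Eu n)) = Set.univ := by
    ext x; simpa using (dens_pos hK x).ne'
  rw [this]
  exact (Measure.measure_univ_pos).2 (NeZero.ne _)

lemma cK_mean {n : ℕ} {K : Set (Eu n)} (hK : IsSmoothConvexBody K) (e : Eu n) :
    ∫ x : Sph n, dens K (x : Eu n) * (⟪gradient (sfn K) (x : Eu n), e⟫_ℝ - ⟪cK K, e⟫_ℝ)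
      ∂sphMeas n = 0 := by
  have hI := dens_int_pos hK
  have hd := sph_cont_dens hK
  have hg := sph_cont_grad hK
  have h1 : ⟪cK K, e⟫_ℝ * (∫ x : Sph n, dens K (x : Eu n) ∂sphMeas n) =
      ∫ x : Sph n, dens K (x : Eu n) * ⟪gradient (sfn K) (x : Eu n), e⟫_ℝ ∂sphMeas n := by
    rw [cK, real_inner_smul_left, real_inner_comm, ← integral_inner (sph_integrable (f := fun x : Sph n =>
      dens K (x : Eu n) • gradient (sfn K) (x : Eu n)) (hd.smul hg))]
    have : ∀ x : Sph n, ⟪e, dens K (x : Eu n) • gradient (sfn K) (x : Eu n)⟫_ℝ =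
        dens K (x : Eu n) * ⟪gradient (sfn K) (x : Eu n), e⟫_ℝ := by
      intro x; rw [real_inner_smul_right, real_inner_comm]
    simp only [this]
    field_simp
  simp only [mul_sub]
  rw [integral_sub, integral_mul_const, ← h1]
  · ring
  · exact sph_integrable (hd.mul (hg.inner continuous_const))
  · exact sph_integrable (hd.mul continuous_const)

lemma local_bm_eta {n : ℕ} {K : Set (Eu n)} (hK : IsSmoothConvexBody K) (e : Eu n)
    {η : ℝ} (hη : 0 < η) {f a w h : Sph n → ℝ}
    (hf : ∀ x, f x = ⟪gradient (sfn K) (x : Eu n), e⟫_ℝ - ⟪cK K, e⟫_ℝ)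
    (ha : ∀ x, a x = ⟪hessA K (x : Eu n) e, e⟫_ℝ) (hw : ∀ x, w x = dens K (x : Eu n))
    (hh : ∀ x, h x = sfn K (x : Eu n)) :
    n * (∫ x, w x * f x ^ 2 ∂sphMeas n) ≤ (∫ x, w x * (h x * a x) ∂sphMeas n) +
      4 * η * ∫ x, w x ∂sphMeas n := by
  have hcf : Continuous f := by
    have : f = fun x : Sph n => ⟪gradient (sfn K) (x : Eu n), e⟫_ℝ - ⟪cK K, e⟫_ℝ := funext hf
    rw [this]
    exact ((sph_cont_grad hK).inner continuous_const).sub continuous_const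
  have hca : Continuous a := by
    have : a = fun x : Sph n => ⟪hessA K (x : Eu n) e, e⟫_ℝ := funext ha
    rw [this]
    exact ((sph_cont_hess hK).clm_apply continuous_const).inner continuous_const
  have hch : Continuous h := by rw [funext hh]; exact sph_cont_sfn hK
  have hcw : Continuous w := by rw [funext hw]; exact sph_cont_dens hK
  have hw0 : ∀ x, 0 < w x := fun x => by rw [hw]; exact dens_pos hK x
  set k : Sph n → ℝ := fun x => f x ^ 2 + h x * a x / 2 + η / 2 with hk
  have hck : Continuous k := by fun_prop
  have hm : ∫ x, w x * f x ∂sphMeas n = 0 := by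
    simp only [hw, hf]; exact cK_mean hK e
  have hmn : ∫ x, w x * (-f x) ∂sphMeas n = 0 := by
    simp only [mul_neg, integral_neg, hm, neg_zero]
  obtain ⟨C1, E1⟩ := int_exp (n + 1) hcw hcf ((hcf.pow 2).sub (continuous_const (y := η)))
  obtain ⟨C2, E2⟩ := int_exp (n + 1) hcw hcf.neg ((hcf.pow 2).sub (continuous_const (y := η)))
  obtain ⟨C3, E3⟩ := int_exp (n + 1) hcw (continuous_const (y := (0:ℝ)))
    (hck.add (continuous_const (y := η / 2)))
  have ev := incl_half hK e ⟪cK K, e⟫_ℝ hf ha hη (k := k) (fun x => by rw [hk, ← hh])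
  have evn : ∀ᶠ d in 𝓝 (0:ℝ), _ := (by
    have : Filter.Tendsto (fun d : ℝ => -d) (𝓝 0) (𝓝 0) := by
      simpa using (continuous_neg (G := ℝ)).tendsto 0
    exact this.eventually ev)
  set I := ∫ x, w x ∂sphMeas n with hI
  set p := ∫ x, w x * (((n + 1 : ℕ) : ℝ) * (f x ^ 2 - η) +
    ((n + 1 : ℕ) : ℝ) * (((n + 1 : ℕ) : ℝ) - 1) / 2 * f x ^ 2) ∂sphMeas n with hp
  set q := ∫ x, w x * (((n + 1 : ℕ) : ℝ) * (k x + η / 2) +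
    ((n + 1 : ℕ) : ℝ) * (((n + 1 : ℕ) : ℝ) - 1) / 2 * (0:ℝ) ^ 2) ∂sphMeas n with hq
  have hI0 : 0 < I := by
    rw [hI]; simp only [hw]; exact dens_int_pos hK
  have hk0 : ∀ x, 0 ≤ k x := by
    intro x
    have h1 := hess_nonneg hK x e
    have h2 := hK.pos x
    rw [← ha] at h1
    rw [← hh] at h2
    simp only [hk]; positivity
  have hpq : p ≤ q := by
    by_contra hcon
    push Not at hcon
    set C := |C1| + |C2| + |C3| with hC
    have hC0 : 0 ≤ C := by positivity
    have ev3 : ∀ᶠ d in 𝓝[>] (0:ℝ), 2 * C * d < p - q := by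
      have : Filter.Tendsto (fun d : ℝ => 2 * C * d) (𝓝[>] 0) (𝓝 0) := by
        have h1 : Filter.Tendsto (fun d : ℝ => 2 * C * d) (𝓝 0) (𝓝 (2 * C * 0)) :=
          (continuous_const.mul continuous_id).tendsto 0
        rw [mul_zero] at h1
        exact h1.mono_left nhdsWithin_le_nhds
      exact this.eventually_lt_const (by linarith)
    have ev4 : ∀ᶠ d in 𝓝[>] (0:ℝ), d ≤ 1 :=
      nhdsWithin_le_nhds ((eventually_le_nhds (by norm_num : (0:ℝ) < 1)))
    obtain ⟨d, ⟨⟨⟨⟨hd1, hd1'⟩, ⟨hd2, hd2'⟩⟩, hd3⟩, hd4⟩, hd0⟩ :=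
      (((((ev.filter_mono nhdsWithin_le_nhds).and (evn.filter_mono nhdsWithin_le_nhds)).and
        ev3).and ev4).and self_mem_nhdsWithin).exists
    have hd0 : 0 < d := hd0
    have hdabs : |d| = d := abs_of_pos hd0
    have B := bm_applied hK (p := fun x => 1 + d * f x + d ^ 2 * (f x ^ 2 - η))
      (q := fun x => 1 + -d * f x + (-d) ^ 2 * (f x ^ 2 - η))
      (ψ := fun x => 1 + d * 0 + d ^ 2 * (k x + η / 2))
      (s1 := fun x => 1 + d * f x + d ^ 2 * k x) (s2 := fun x => 1 + -d * f x + (-d) ^ 2 * k x)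
      (by fun_prop) (by fun_prop) (by fun_prop) hd1 hd2
      (fun x => by have := hk0 x; positivity) hd1' hd2'
      (fun x => by nlinarith [mul_pos (sq_pos_of_pos hd0) hη])
    simp only [← hw] at B
    have e1 := (abs_le.1 (E1 d (by rw [hdabs]; exact hd4))).1
    have e2 := (abs_le.1 (E2 d (by rw [hdabs]; exact hd4))).1
    have e3 := (abs_le.1 (E3 d (by rw [hdabs]; exact hd4))).2
    simp only [Pi.pow_apply, Pi.sub_apply, Pi.neg_apply, neg_sq, hm, hmn, mul_zero,
      integral_zero, add_zero, hdabs, ← hp] at e1 e2 e3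
    simp only [neg_sq, mul_zero, add_zero, neg_mul] at B
    simp only [mul_neg] at e2
    simp only [Pi.add_apply, ← hq] at e3
    have hQ : 0 ≤ ∫ x, w x * (1 + d ^ 2 * (k x + η / 2)) ^ (n + 1) ∂sphMeas n := by
      refine integral_nonneg fun x => ?_
      have := hw0 x
      have := hk0 x
      simp only [Pi.zero_apply]; positivity
    set P1 := ∫ x, w x * (1 + d * f x + d ^ 2 * (f x ^ 2 - η)) ^ (n + 1) ∂sphMeas n
    set P2 := ∫ x, w x * (1 + -(d * f x) + d ^ 2 * (f x ^ 2 - η)) ^ (n + 1) ∂sphMeas n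
    set Q := ∫ x, w x * (1 + d ^ 2 * (k x + η / 2)) ^ (n + 1) ∂sphMeas n
    have hd3' := mul_lt_mul_of_pos_left hd3 (pow_pos hd0 2)
    have hdd : 0 < d ^ 3 := pow_pos hd0 3
    have b1 := mul_le_mul_of_nonneg_right (le_abs_self C1) hdd.le
    have b2 := mul_le_mul_of_nonneg_right (le_abs_self C2) hdd.le
    have b3 := mul_le_mul_of_nonneg_right (le_abs_self C3) hdd.le
    have n1 := mul_nonneg (abs_nonneg C1) hdd.le
    have n2 := mul_nonneg (abs_nonneg C2) hdd.le
    have n3 := mul_nonneg (abs_nonneg C3) hdd.le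
    rw [hC] at hd3'
    have hQ1 : Q < P1 := by linarith
    have hQ2 : Q < P2 := by linarith
    nlinarith
  have hp' : p = ((n:ℝ) + 1) * (1 + n / 2) * (∫ x, w x * f x ^ 2 ∂sphMeas n) - (n + 1) * η * I := by
    rw [hp, hI, ← integral_const_mul, ← integral_const_mul, ← integral_sub]
    · refine integral_congr_ae (Filter.Eventually.of_forall fun x => ?_)
      push_cast; ring
    all_goals exact sph_integrable (by fun_prop)
  have hq' : q = ((n:ℝ) + 1) * (∫ x, w x * f x ^ 2 ∂sphMeas n) +
      (n + 1) / 2 * (∫ x, w x * (h x * a x) ∂sphMeas n) + (n + 1) * η * I := by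
    rw [hq, hI, ← integral_const_mul, ← integral_const_mul, ← integral_const_mul, ← integral_add,
      ← integral_add]
    · refine integral_congr_ae (Filter.Eventually.of_forall fun x => ?_)
      simp only [hk]; push_cast; ring
    all_goals exact sph_integrable (by fun_prop)
  rw [hp', hq'] at hpq
  have hN : (0:ℝ) < n + 1 := by positivity
  refine le_of_mul_le_mul_left ?_ hN
  linarith

lemma local_bm {n : ℕ} {K : Set (Eu n)} (hK : IsSmoothConvexBody K) (e : Eu n) :
    n * (∫ x : Sph n, dens K (x : Eu n) * ⟪gradient (sfn K) (x : Eu n) - cK K, e⟫_ℝ ^ 2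
      ∂sphMeas n) ≤ ∫ x : Sph n, dens K (x : Eu n) *
        (sfn K (x : Eu n) * ⟪hessA K (x : Eu n) e, e⟫_ℝ) ∂sphMeas n := by
  have hI := dens_int_pos hK
  refine le_of_forall_pos_le_add fun ε hε => ?_
  have := local_bm_eta hK e (η := ε / (4 * ∫ x : Sph n, dens K (x : Eu n) ∂sphMeas n))
    (by positivity) (fun x => rfl) (fun x => rfl) (fun x => rfl) (fun x => rfl)
  simp only [← inner_sub_left] at this
  refine this.trans (le_of_eq ?_)
  congr 1
  field_simp


/-- A radial bump used as cutoff. -/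
def rbump : ContDiffBump (2 : ℝ) := ⟨1 / 2, 1, by norm_num, by norm_num⟩

lemma rbump_zero {s : ℝ} (hs : s ∉ Set.Icc (1:ℝ) 3) : rbump s = 0 ∧ deriv rbump s = 0 := by
  have h : s ∉ tsupport rbump := by
    rw [rbump.tsupport_eq]
    have : rbump.rOut = 1 := rfl
    rw [this, Real.closedBall_eq_Icc]
    norm_num at hs ⊢
    exact hs
  refine ⟨image_eq_zero_of_notMem_tsupport h, ?_⟩
  exact Function.notMem_support.1 fun h' => h (support_deriv_subset h')

/-- The cutoff as a function on Euclidean space. -/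
def cutf {n : ℕ} (x : Eu n) : ℝ := rbump (‖x‖ ^ 2)

lemma rbump_diff (s : ℝ) : HasDerivAt rbump (deriv rbump s) s :=
  ((rbump.contDiff (n := 1)).differentiable (by simp) s).hasDerivAt

lemma cutf_hasFDerivAt {n : ℕ} (x : Eu n) :
    HasFDerivAt (cutf (n := n)) (deriv rbump (‖x‖ ^ 2) • 2 • innerSL ℝ x) x :=
  (rbump_diff (‖x‖ ^ 2)).comp_hasFDerivAt x (hasStrictFDerivAt_norm_sq x).hasFDerivAt

lemma cutf_fderiv {n : ℕ} (x v : Eu n) :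
    fderiv ℝ (cutf (n := n)) x v = deriv rbump (‖x‖ ^ 2) * (2 * ⟪x, v⟫_ℝ) := by
  rw [(cutf_hasFDerivAt x).fderiv]; simp

lemma cutf_cont {n : ℕ} : Continuous (cutf (n := n)) :=
  rbump.continuous.comp (continuous_norm.pow 2)

lemma drbump_cont : Continuous (deriv rbump) :=
  (rbump.contDiff (n := 1)).continuous_deriv le_rfl

lemma annulus_integrable {n : ℕ} {F : Eu n → ℝ} (hc : ∀ x, x ≠ 0 → ContinuousAt F x)
    (h0 : ∀ x, ‖x‖ ^ 2 ∉ Set.Icc (1:ℝ) 3 → F x = 0) : Integrable F := by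
  have hcont : Continuous F := by
    rw [continuous_iff_continuousAt]
    intro x
    by_cases hx : x = 0
    · have : F =ᶠ[𝓝 x] fun _ => 0 := by
        filter_upwards [Metric.ball_mem_nhds x zero_lt_one] with y hy
        refine h0 y fun h => ?_
        rw [hx, mem_ball_zero_iff] at hy
        nlinarith [h.1, norm_nonneg y]
      exact continuousAt_const.congr this.symm
    · exact hc x hx
  refine hcont.integrable_of_hasCompactSupport ?_
  refine HasCompactSupport.intro (isCompact_closedBall (0 : Eu n) 2) fun x hx => h0 x fun h => hx ?_
  rw [mem_closedBall_zero_iff]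
  nlinarith [h.2, norm_nonneg x]

lemma cutf_tsupport {n : ℕ} {x : Eu n} (hx : x ∈ tsupport (cutf (n := n))) : x ≠ 0 := by
  have : tsupport (cutf (n := n)) ⊆ {x : Eu n | 1 ≤ ‖x‖ ^ 2} := by
    refine closure_minimal (fun y hy => ?_) (isClosed_le continuous_const (by fun_prop))
    by_contra h
    exact hy (rbump_zero fun h' => h h'.1).1
  rintro rfl
  have := this hx
  norm_num at this

/-- Divergence. -/
def dvg {n : ℕ} (X : Eu n → Eu n) (x : Eu n) : ℝ :=
  ∑ i, ⟪fderiv ℝ X x (EuclideanSpace.basisFun (Fin (n + 1)) ℝ i),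
    EuclideanSpace.basisFun (Fin (n + 1)) ℝ i⟫_ℝ

lemma dvg_parts {n : ℕ} {X : Eu n → Eu n} (hX : ∀ x, x ≠ 0 → ContDiffAt ℝ 1 X x) :
    ∫ x, cutf x * dvg X x = - ∫ x : Eu n, deriv rbump (‖x‖ ^ 2) * (2 * ⟪x, X x⟫_ℝ) := by
  have hdiff : ∀ x, x ≠ 0 → DifferentiableAt ℝ X x := fun x hx => (hX x hx).differentiableAt (by simp)
  have hdc : ∀ x, x ≠ 0 → ContinuousAt (fderiv ℝ X) x := fun x hx =>
    ((hX x hx).fderiv_right (m := 0) (by simp)).continuousAt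
  have hg : ∀ (v x : Eu n), x ≠ 0 → HasFDerivAt (fun y => ⟪X y, v⟫_ℝ)
      ((innerSL ℝ v).comp (fderiv ℝ X x)) x := by
    intro v x hx
    have := (innerSL ℝ v).hasFDerivAt.comp x (hdiff x hx).hasFDerivAt
    refine this.congr_of_eventuallyEq (Filter.Eventually.of_forall fun y => ?_)
    simp [real_inner_comm]
  have i1 : ∀ v : Eu n, Integrable fun x => fderiv ℝ cutf x v * ⟪X x, v⟫_ℝ := by
    intro v
    refine annulus_integrable (fun x hx => ?_) (fun x hx => ?_)
    · simp only [cutf_fderiv]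
      have := (hX x hx).continuousAt
      have h2 : ContinuousAt (fun x : Eu n => deriv rbump (‖x‖ ^ 2)) x :=
        (drbump_cont.comp (continuous_norm.pow 2)).continuousAt
      fun_prop
    · rw [cutf_fderiv, (rbump_zero hx).2]; simp
  have i2 : ∀ v : Eu n, Integrable fun x => cutf x * ⟪fderiv ℝ X x v, v⟫_ℝ := by
    intro v
    refine annulus_integrable (fun x hx => ?_) (fun x hx => ?_)
    · have := hdc x hx
      have h2 := (cutf_cont (n := n)).continuousAt (x := x)
      exact h2.mul ((this.clm_apply continuousAt_const).inner continuousAt_const)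
    · rw [cutf, (rbump_zero hx).1]; simp
  have i3 : ∀ v : Eu n, Integrable fun x => cutf x * ⟪X x, v⟫_ℝ := by
    intro v
    refine annulus_integrable (fun x hx => ?_) (fun x hx => ?_)
    · exact (cutf_cont (n := n)).continuousAt.mul ((hX x hx).continuousAt.inner continuousAt_const)
    · rw [cutf, (rbump_zero hx).1]; simp
  have e0 : ∀ v x : Eu n, cutf x * fderiv ℝ (fun y => ⟪X y, v⟫_ℝ) x v =
      cutf x * ⟪fderiv ℝ X x v, v⟫_ℝ := by
    intro v x
    by_cases hx : x = 0
    · have : cutf x = 0 := by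
        rw [hx, cutf]; exact (rbump_zero (by norm_num)).1
      rw [this]; simp
    · rw [(hg v x hx).fderiv]; simp [real_inner_comm]
  have key : ∀ v : Eu n, ∫ x, cutf x * ⟪fderiv ℝ X x v, v⟫_ℝ =
      - ∫ x, fderiv ℝ cutf x v * ⟪X x, v⟫_ℝ := by
    intro v
    have := integral_mul_fderiv_eq_neg_fderiv_mul_of_integrable (μ := (volume : Measure (Eu n)))
      (f := cutf) (g := fun y => ⟪X y, v⟫_ℝ) (v := v) (i1 v) (by simp only [e0]; exact i2 v) (i3 v)
      (fun x _ => (cutf_hasFDerivAt x).differentiableAt)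
      (fun x hx => (hg v x (cutf_tsupport hx)).differentiableAt)
    simp only [e0] at this
    exact this
  simp only [dvg, Finset.mul_sum]
  rw [integral_finsetSum _ (fun i _ => i2 _)]
  simp only [key]
  rw [Finset.sum_neg_distrib, ← integral_finsetSum _ (fun i _ => i1 _)]
  congr 1
  refine integral_congr_ae (Filter.Eventually.of_forall fun x => ?_)
  simp only [cutf_fderiv]
  rw [← (EuclideanSpace.basisFun (Fin (n + 1)) ℝ).sum_inner_mul_inner x (X x), Finset.mul_sum,
    Finset.mul_sum]
  refine Finset.sum_congr rfl fun i _ => ?_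
  rw [real_inner_comm (X x)]; ring

lemma dvg_polar {n : ℕ} {X : Eu n → Eu n} (hX : ∀ x, x ≠ 0 → ContDiffAt ℝ 1 X x)
    (hh : ∀ t : ℝ, 0 < t → ∀ x : Eu n, x ≠ 0 → X (t • x) = t • X x) :
    (∫ u : Sph n, dvg X (u : Eu n) ∂sphMeas n) *
      (∫ r : Set.Ioi (0:ℝ), rbump ((r:ℝ) ^ 2) ∂Measure.volumeIoiPow n) =
    - ((∫ u : Sph n, ⟪(u : Eu n), X (u : Eu n)⟫_ℝ ∂sphMeas n) *
      (∫ r : Set.Ioi (0:ℝ), deriv rbump ((r:ℝ) ^ 2) * (2 * (r:ℝ) ^ 2) ∂Measure.volumeIoiPow n)) := by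
  have h := dvg_parts hX
  rw [polar_integral, polar_integral] at h
  rw [← integral_prod_mul, ← integral_prod_mul]
  have hn : ∀ (r : Set.Ioi (0:ℝ)) (u : Sph n), ‖(r:ℝ) • (u : Eu n)‖ = r := by
    intro r u
    rw [norm_smul, sph_norm, mul_one, Real.norm_of_nonneg (le_of_lt r.2)]
  convert h using 1
  · refine integral_congr_ae (Filter.Eventually.of_forall fun p => ?_)
    simp only [cutf, hn, dvg]
    rw [fderiv_hom hh (fun x hx => (hX x hx).differentiableAt (by simp)) p.2.2 (sph_ne p.1)]
    ring
  · congr 1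
    refine integral_congr_ae (Filter.Eventually.of_forall fun p => ?_)
    simp only [hn, hh p.2 p.2.2 p.1 (sph_ne p.1), real_inner_smul_left, real_inner_smul_right]
    ring

lemma alpha_ne (n : ℕ) :
    (∫ r : Set.Ioi (0:ℝ), rbump ((r:ℝ) ^ 2) ∂Measure.volumeIoiPow n) ≠ 0 := by
  have h1 : 0 < ∫ x : Eu n, cutf x := by
    refine (cutf_cont).integral_pos_of_hasCompactSupport_nonneg_nonzero
      (x := EuclideanSpace.single 0 (√2)) ?_ (fun x => rbump.nonneg) ?_
    · refine HasCompactSupport.intro (isCompact_closedBall (0 : Eu n) 2) fun x hx =>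
        (rbump_zero fun h => hx ?_).1
      rw [mem_closedBall_zero_iff]
      nlinarith [h.2, norm_nonneg x]
    · have : rbump 2 = 1 := rbump.one_of_mem_closedBall (by simp [rbump.rIn_pos.le])
      simp [cutf, this]
  rw [polar_integral] at h1
  intro h0
  have hn : ∀ (r : Set.Ioi (0:ℝ)) (u : Sph n), ‖(r:ℝ) • (u : Eu n)‖ = r := by
    intro r u
    rw [norm_smul, sph_norm, mul_one, Real.norm_of_nonneg (le_of_lt r.2)]
  simp only [cutf, hn] at h1
  have := integral_prod_mul (μ := sphMeas n) (ν := Measure.volumeIoiPow n)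
    (fun _ : Sph n => (1:ℝ)) (fun r : Set.Ioi (0:ℝ) => rbump ((r:ℝ) ^ 2))
  rw [h0, mul_zero] at this
  simp only [one_mul] at this
  linarith

lemma dvg_sph {n : ℕ} {X : Eu n → Eu n} (hX : ∀ x, x ≠ 0 → ContDiffAt ℝ 1 X x)
    (hh : ∀ t : ℝ, 0 < t → ∀ x : Eu n, x ≠ 0 → X (t • x) = t • X x) :
    (∫ u : Sph n, dvg X (u : Eu n) ∂sphMeas n) =
      (n + 1) * (∫ u : Sph n, ⟪(u : Eu n), X (u : Eu n)⟫_ℝ ∂sphMeas n) := by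
  have h1 := dvg_polar hX hh
  have h2 := dvg_polar (n := n) (X := fun x => x) (fun x _ => contDiffAt_id) (fun t _ x _ => rfl)
  have e1 : ∀ u : Sph n, dvg (fun x => x) (u : Eu n) = n + 1 := by
    intro u
    simp only [dvg, fderiv_fun_id, ContinuousLinearMap.id_apply]
    simp
  have e2 : ∀ u : Sph n, ⟪(u : Eu n), (u : Eu n)⟫_ℝ = 1 := fun u => by
    rw [real_inner_self_eq_norm_sq, sph_norm]; simp
  simp only [e1, e2, integral_const, smul_eq_mul, mul_one] at h2
  have ha := alpha_ne n
  set α := ∫ r : Set.Ioi (0:ℝ), rbump ((r:ℝ) ^ 2) ∂Measure.volumeIoiPow n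
  set β := ∫ r : Set.Ioi (0:ℝ), deriv rbump ((r:ℝ) ^ 2) * (2 * (r:ℝ) ^ 2) ∂Measure.volumeIoiPow n
  have hS : (sphMeas n).real Set.univ ≠ 0 := measureReal_univ_ne_zero
  have hβ : β = - ((n + 1) * α) := by
    have : (sphMeas n).real Set.univ * β = (sphMeas n).real Set.univ * (- ((n + 1) * α)) := by
      linarith
    exact mul_left_cancel₀ hS this
  rw [hβ] at h1
  refine mul_right_cancel₀ ha ?_
  linarith


/-- Trace of the Hessian. -/
def trA {n : ℕ} (K : Set (Eu n)) (x : Eu n) : ℝ :=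
  ∑ i, ⟪hessA K x (EuclideanSpace.basisFun (Fin (n + 1)) ℝ i),
    EuclideanSpace.basisFun (Fin (n + 1)) ℝ i⟫_ℝ

lemma trA_nonneg {n : ℕ} {K : Set (Eu n)} (hK : IsSmoothConvexBody K) (x : Sph n) :
    0 ≤ trA K (x : Eu n) := Finset.sum_nonneg fun _ _ => hess_nonneg hK x _

lemma sph_cont_trA {n : ℕ} {K : Set (Eu n)} (hK : IsSmoothConvexBody K) :
    Continuous fun x : Sph n => trA K (x : Eu n) :=
  continuous_finsetSum _ fun _ _ =>
    ((sph_cont_hess hK).clm_apply continuous_const).inner continuous_const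

/-- The vector field used for the integral identity. -/
def XK {n : ℕ} (K : Set (Eu n)) (c : Eu n) (x : Eu n) : Eu n :=
  (sfn K x - ⟪x, c⟫_ℝ) • (gradient (sfn K) x - c) + ⟪x, c⟫_ℝ • gradient (sfn K) x - sfn K x • c

lemma XK_hom {n : ℕ} {K : Set (Eu n)} (hK : IsSmoothConvexBody K) (c : Eu n) {t : ℝ} (ht : 0 < t)
    {x : Eu n} (hx : x ≠ 0) : XK K c (t • x) = t • XK K c x := by
  simp only [XK, sfn_smul hK ht.le, grad_smul hK ht hx, real_inner_smul_left]
  module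

lemma XK_contDiffAt {n : ℕ} {K : Set (Eu n)} (hK : IsSmoothConvexBody K) (c : Eu n)
    {x : Eu n} (hx : x ≠ 0) : ContDiffAt ℝ 1 (XK K c) x := by
  have h1 : ContDiffAt ℝ 1 (sfn K) x :=
    (sfn_contDiffAt hK hx).of_le (WithTop.coe_le_coe.2 (le_top : (1:ℕ∞) ≤ ⊤))
  have h2 : ContDiffAt ℝ 1 (gradient (sfn K)) x :=
    (grad_contDiffAt hK hx).of_le (WithTop.coe_le_coe.2 (le_top : (1:ℕ∞) ≤ ⊤))
  have h3 : ContDiffAt ℝ 1 (fun x : Eu n => ⟪x, c⟫_ℝ) x := contDiffAt_id.inner ℝ contDiffAt_const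
  exact (((h1.sub h3).smul (h2.sub contDiffAt_const)).add (h3.smul h2)).sub (h1.smul contDiffAt_const)

lemma XK_fderiv {n : ℕ} {K : Set (Eu n)} (hK : IsSmoothConvexBody K) (c : Eu n)
    {x : Eu n} (hx : x ≠ 0) (v : Eu n) : fderiv ℝ (XK K c) x v =
      (⟪gradient (sfn K) x - c, v⟫_ℝ) • (gradient (sfn K) x - c) + sfn K x • hessA K x v +
        ⟪c, v⟫_ℝ • gradient (sfn K) x - ⟪gradient (sfn K) x, v⟫_ℝ • c := by
  have h1 : HasFDerivAt (sfn K) (innerSL ℝ (gradient (sfn K) x)) x :=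
    (sfn_hasGradientAt hK hx).hasFDerivAt
  have h2 : HasFDerivAt (gradient (sfn K)) (hessA K x) x := grad_hasFDerivAt hK hx
  have h3 : HasFDerivAt (fun x : Eu n => ⟪x, c⟫_ℝ) (innerSL ℝ c) x := by
    refine (innerSL ℝ c).hasFDerivAt.congr_of_eventuallyEq (Filter.Eventually.of_forall fun y => ?_)
    simp [real_inner_comm]
  have := (((h1.sub h3).smul (h2.sub_const c)).add (h3.smul h2)).sub (h1.smul_const c)
  have h4 : HasFDerivAt (XK K c) _ x := this
  rw [h4.fderiv]
  simp only [_root_.add_apply, _root_.sub_apply, _root_.smul_apply, Pi.sub_apply,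
    ContinuousLinearMap.smulRight_apply, innerSL_apply_apply, inner_sub_left]
  module

lemma XK_dvg {n : ℕ} {K : Set (Eu n)} (hK : IsSmoothConvexBody K) (c : Eu n)
    {x : Eu n} (hx : x ≠ 0) :
    dvg (XK K c) x = ‖gradient (sfn K) x - c‖ ^ 2 + sfn K x * trA K x := by
  simp only [dvg, XK_fderiv hK c hx, inner_add_left, inner_sub_left (𝕜 := ℝ) (_ + _),
    real_inner_smul_left, Finset.sum_add_distrib, Finset.sum_sub_distrib]
  set b := EuclideanSpace.basisFun (Fin (n + 1)) ℝ
  have hb : ∀ u w : Eu n, ∑ i, ⟪u, b i⟫_ℝ * ⟪w, b i⟫_ℝ = ⟪u, w⟫_ℝ := by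
    intro u w
    rw [← b.sum_inner_mul_inner u w]
    exact Finset.sum_congr rfl fun i _ => by rw [real_inner_comm w]
  rw [hb, hb, hb, ← Finset.mul_sum, real_inner_self_eq_norm_sq,
    real_inner_comm c]
  simp only [trA]
  ring

lemma XK_inner {n : ℕ} {K : Set (Eu n)} (hK : IsSmoothConvexBody K) (c : Eu n) (x : Sph n) :
    ⟪(x : Eu n), XK K c (x : Eu n)⟫_ℝ = (sfn K (x : Eu n) - ⟪(x : Eu n), c⟫_ℝ) ^ 2 := by
  simp only [XK, inner_add_right, inner_sub_right, real_inner_smul_right, inner_grad hK (sph_ne x)]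
  ring

theorem stability_estimate (n : ℕ) (hn : 1 ≤ n)
    (K : Set (Eu n)) (hK : IsSmoothConvexBody K) (M m ε : ℝ)
    (hM : IsGreatest (Set.range fun x : Sph n => dens K (x : Eu n)) M)
    (hm : IsLeast (Set.range fun x : Sph n => dens K (x : Eu n)) m)
    (hε : ε = M / m - 1) :
    ((n : ℝ) + 1 + ε) *
        ∫ x : Sph n, (‖gradient (sfn K) (x : Eu n) - cK K‖ ^ 2 - tsfn K (x : Eu n) ^ 2) ∂sphMeas n ≤
      (n : ℝ) * ε * ∫ x : Sph n, tsfn K (x : Eu n) ^ 2 ∂sphMeas n := by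
  have hcd := sph_cont_dens hK
  have hcg := sph_cont_grad hK
  have hch := sph_cont_sfn hK
  have hcA := sph_cont_hess hK
  have hct := sph_cont_trA hK
  have hcY : Continuous fun x : Sph n => ‖gradient (sfn K) (x : Eu n) - cK K‖ ^ 2 := by fun_prop
  have hcT : Continuous fun x : Sph n => tsfn K (x : Eu n) ^ 2 := by
    unfold tsfn
    exact (hch.sub (continuous_subtype_val.inner continuous_const)).pow 2
  -- divergence identity
  have hdiv := dvg_sph (X := XK K (cK K)) (fun x hx => XK_contDiffAt hK _ hx)
    (fun t ht x hx => XK_hom hK _ ht hx)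
  have e1 : ∀ x : Sph n, dvg (XK K (cK K)) (x : Eu n) =
      ‖gradient (sfn K) (x : Eu n) - cK K‖ ^ 2 + sfn K (x : Eu n) * trA K (x : Eu n) :=
    fun x => XK_dvg hK _ (sph_ne x)
  have e2 : ∀ x : Sph n, ⟪(x : Eu n), XK K (cK K) (x : Eu n)⟫_ℝ = tsfn K (x : Eu n) ^ 2 :=
    fun x => XK_inner hK _ x
  simp only [e1, e2] at hdiv
  have hcht : Continuous fun x : Sph n => sfn K (x : Eu n) * trA K (x : Eu n) := hch.mul hct
  rw [integral_add (sph_integrable hcY) (sph_integrable hcht)] at hdiv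
  -- summed local Brunn-Minkowski
  have hsum : n * (∫ x : Sph n, dens K (x : Eu n) * ‖gradient (sfn K) (x : Eu n) - cK K‖ ^ 2
      ∂sphMeas n) ≤ ∫ x : Sph n, dens K (x : Eu n) * (sfn K (x : Eu n) * trA K (x : Eu n))
        ∂sphMeas n := by
    set b := EuclideanSpace.basisFun (Fin (n + 1)) ℝ with hb
    have h1 := Finset.sum_le_sum (s := Finset.univ) fun i _ => local_bm hK (b i)
    rw [← Finset.mul_sum, ← integral_finsetSum, ← integral_finsetSum] at h1
    · have q1 : ∀ x : Sph n, ∑ i, dens K (x : Eu n) *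
          ⟪gradient (sfn K) (x : Eu n) - cK K, b i⟫_ℝ ^ 2 =
          dens K (x : Eu n) * ‖gradient (sfn K) (x : Eu n) - cK K‖ ^ 2 := by
        intro x
        rw [← Finset.mul_sum, ← b.sum_sq_norm_inner_right]
        congr 1
        refine Finset.sum_congr rfl fun i _ => ?_
        rw [Real.norm_eq_abs, sq_abs, real_inner_comm]
      have q2 : ∀ x : Sph n, ∑ i, dens K (x : Eu n) *
          (sfn K (x : Eu n) * ⟪hessA K (x : Eu n) (b i), b i⟫_ℝ) =
          dens K (x : Eu n) * (sfn K (x : Eu n) * trA K (x : Eu n)) := by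
        intro x
        rw [← Finset.mul_sum, ← Finset.mul_sum, trA]
      simp only [q1, q2] at h1
      exact h1
    · intro i _
      exact sph_integrable (hcd.mul (hch.mul
        ((hcA.clm_apply continuous_const).inner continuous_const)))
    · intro i _
      exact sph_integrable (hcd.mul (((hcg.sub continuous_const).inner continuous_const).pow 2))
  have hm0 : 0 < m := by
    obtain ⟨x, hx⟩ := hm.1
    rw [← hx]; exact dens_pos hK x
  have hlow : m * (∫ x : Sph n, ‖gradient (sfn K) (x : Eu n) - cK K‖ ^ 2 ∂sphMeas n) ≤
      ∫ x : Sph n, dens K (x : Eu n) * ‖gradient (sfn K) (x : Eu n) - cK K‖ ^ 2 ∂sphMeas n := by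
    rw [← integral_const_mul]
    refine integral_mono (sph_integrable (continuous_const.mul hcY))
      (sph_integrable (hcd.mul hcY)) fun x => ?_
    exact mul_le_mul_of_nonneg_right (hm.2 ⟨x, rfl⟩) (sq_nonneg _)
  have hup : ∫ x : Sph n, dens K (x : Eu n) * (sfn K (x : Eu n) * trA K (x : Eu n)) ∂sphMeas n ≤
      M * ∫ x : Sph n, sfn K (x : Eu n) * trA K (x : Eu n) ∂sphMeas n := by
    rw [← integral_const_mul]
    refine integral_mono (sph_integrable (hcd.mul (hch.mul hct)))
      (sph_integrable (continuous_const.mul (hch.mul hct))) fun x => ?_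
    exact mul_le_mul_of_nonneg_right (hM.2 ⟨x, rfl⟩)
      (mul_nonneg (hK.pos x).le (trA_nonneg hK x))
  rw [integral_sub (sph_integrable hcY) (sph_integrable hcT)]
  set P := ∫ x : Sph n, ‖gradient (sfn K) (x : Eu n) - cK K‖ ^ 2 ∂sphMeas n
  set H := ∫ x : Sph n, tsfn K (x : Eu n) ^ 2 ∂sphMeas n
  set L := ∫ x : Sph n, sfn K (x : Eu n) * trA K (x : Eu n) ∂sphMeas n
  have hMm : M = (1 + ε) * m := by rw [hε]; field_simp; ring
  have hL : L = (n + 1) * H - P := by linarith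
  have h5 : n * (m * P) ≤ M * L :=
    (mul_le_mul_of_nonneg_left hlow (Nat.cast_nonneg n)).trans (hsum.trans hup)
  rw [hMm, hL] at h5
  refine le_of_mul_le_mul_left ?_ hm0
  linarith
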